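/- For all 1 ≤ i₁, i₂ ≤ n²/2 and j₁, j₂ ∈ {0,1}, every indecomposable direct summand of the left u-module S_{2i₁,j₁}⊗S_{2i₂,j₂} is either a simple u-module or a projective u-module. -/

import Mathlib

noncomputable section

open scoped TensorProduct

namespace QFL

/-- The defining relations of the quasi-Frobenius-Lusztig kernel `ũ_q(sl₂)`,
on the free algebra on four generators `K = ι 0`, `K̂ = ι 1`, `E = ι 2`, `F = ι 3`. -/
inductive Rel (k : Type) [Field k] (n : ℕ) (q : k) :
    FreeAlgebra k (Fin 4) → FreeAlgebra k (Fin 4) → Prop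
  | Kord : Rel k n q (FreeAlgebra.ι k (0 : Fin 4) ^ n) 1
  | Khord : Rel k n q (FreeAlgebra.ι k (1 : Fin 4) ^ n)
      ((FreeAlgebra.ι k (0 : Fin 4) ^ (n - 1)) ^ 2)
  | KKh : Rel k n q (FreeAlgebra.ι k (0 : Fin 4) * FreeAlgebra.ι k (1 : Fin 4))
      (FreeAlgebra.ι k (1 : Fin 4) * FreeAlgebra.ι k (0 : Fin 4))
  | KE : Rel k n q
      (FreeAlgebra.ι k (0 : Fin 4) * FreeAlgebra.ι k (2 : Fin 4) *
        FreeAlgebra.ι k (0 : Fin 4) ^ (n - 1))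
      (q ^ n • FreeAlgebra.ι k (2 : Fin 4))
  | KF : Rel k n q
      (FreeAlgebra.ι k (0 : Fin 4) * FreeAlgebra.ι k (3 : Fin 4) *
        FreeAlgebra.ι k (0 : Fin 4) ^ (n - 1))
      ((q ^ n)⁻¹ • FreeAlgebra.ι k (3 : Fin 4))
  | KhE : Rel k n q
      (FreeAlgebra.ι k (1 : Fin 4) * FreeAlgebra.ι k (2 : Fin 4) *
        FreeAlgebra.ι k (1 : Fin 4) ^ (n ^ 2 - 1))
      ((q ^ n * (q ^ 2)⁻¹) • FreeAlgebra.ι k (2 : Fin 4))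
  | KhF : Rel k n q
      (FreeAlgebra.ι k (1 : Fin 4) * FreeAlgebra.ι k (3 : Fin 4) *
        FreeAlgebra.ι k (1 : Fin 4) ^ (n ^ 2 - 1))
      (((q ^ n)⁻¹ * q ^ 2) • FreeAlgebra.ι k (3 : Fin 4))
  | Enil : Rel k n q (FreeAlgebra.ι k (2 : Fin 4) ^ n ^ 2) 0
  | Fnil : Rel k n q (FreeAlgebra.ι k (3 : Fin 4) ^ n ^ 2) 0
  | EF : Rel k n q
      (FreeAlgebra.ι k (3 : Fin 4) * FreeAlgebra.ι k (2 : Fin 4) -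
        q⁻¹ • (FreeAlgebra.ι k (2 : Fin 4) * FreeAlgebra.ι k (3 : Fin 4)))
      (1 - FreeAlgebra.ι k (0 : Fin 4) ^ (n - 1) * FreeAlgebra.ι k (1 : Fin 4))

/-- The algebra `ũ_q(sl₂)` as the quotient of the free algebra by the defining relations. -/
abbrev U (k : Type) [Field k] (n : ℕ) (q : k) := RingQuot (Rel k n q)

variable (k : Type) [Field k] (n : ℕ) (q : k)

def K : U k n q := RingQuot.mkAlgHom k (Rel k n q) (FreeAlgebra.ι k (0 : Fin 4))
def Kh : U k n q := RingQuot.mkAlgHom k (Rel k n q) (FreeAlgebra.ι k (1 : Fin 4))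
def E : U k n q := RingQuot.mkAlgHom k (Rel k n q) (FreeAlgebra.ι k (2 : Fin 4))
def F : U k n q := RingQuot.mkAlgHom k (Rel k n q) (FreeAlgebra.ι k (3 : Fin 4))

/-- `K⁻¹ = K^(n-1)`. -/
def Kinv : U k n q := K k n q ^ (n - 1)
/-- `K̂⁻¹ = K̂^(n²-1)`. -/
def Khinv : U k n q := Kh k n q ^ (n ^ 2 - 1)

/-- `φ_{2i} = (2/n²) Σ_{t<n²/2} q^{-2it} (K⁻¹K̂)^t`. -/
def phi (i : ℕ) : U k n q :=
  ((n ^ 2 : k)⁻¹ * 2) • ∑ t ∈ Finset.range (n ^ 2 / 2),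
    (q⁻¹ ^ (2 * i * t)) • (Kinv k n q * Kh k n q) ^ t

/-- `𝟙₀ = (1/2)(1 + KK̂^(n/2))` and `𝟙₁ = (1/2)(1 - KK̂^(n/2))`. -/
def oneJ (j : ℕ) : U k n q :=
  if j = 0 then (2 : k)⁻¹ • (1 + K k n q * Kh k n q ^ (n / 2))
  else (2 : k)⁻¹ • (1 - K k n q * Kh k n q ^ (n / 2))

/-- The idempotent `e_{2i,j} = φ_{2i} 𝟙_j`. -/
def eIdem (i j : ℕ) : U k n q := phi k n q i * oneJ k n q j

/-- `α_{2i,j} = F^(n²-1) e_{2i,j}`. -/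
def alpha (i j : ℕ) : U k n q := F k n q ^ (n ^ 2 - 1) * eIdem k n q i j

/-- `β_{2i,j} = E^(2i-2) α_{2i,j}`. -/
def beta (i j : ℕ) : U k n q := E k n q ^ (2 * i - 2) * alpha k n q i j

/-- The Gaussian number `s_q = 1 + q + ⋯ + q^(s-1)`. -/
def gauss (x : k) (s : ℕ) : k := ∑ t ∈ Finset.range s, x ^ t

/-- The span of the PBW-type monomials `F^a K^c K̂^d E^b` with `a ≤ n²-2`, `b ≤ n²-1`,
`c ≤ n-1`, `d ≤ n²-1`. -/
def pbw : Submodule k (U k n q) :=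
  Submodule.span k {x | ∃ a b c d : ℕ, a ≤ n ^ 2 - 2 ∧ b ≤ n ^ 2 - 1 ∧ c ≤ n - 1 ∧
    d ≤ n ^ 2 - 1 ∧ x = F k n q ^ a * K k n q ^ c * Kh k n q ^ d * E k n q ^ b}

/-- `γ_{2i,j}`: the unique element of the PBW span with `F·γ = β_{2i,j}`. -/
def gam (i j : ℕ) : U k n q :=
  @dite _ (∃! x, x ∈ pbw k n q ∧ F k n q * x = beta k n q i j)
    (Classical.propDecidable _) (fun h => h.choose) (fun _ => 0)

/-- The left ideal `P_{2i,j} = u·γ_{2i,j}`. -/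
def P (i j : ℕ) : Submodule (U k n q) (U k n q) :=
  Submodule.span (U k n q) {gam k n q i j}

/-- `S_{2i,j} = Soc(P_{2i,j})`, the sum of all simple submodules of `P_{2i,j}`. -/
def S (i j : ℕ) : Submodule (U k n q) (U k n q) :=
  sSup {N : Submodule (U k n q) (U k n q) | N ≤ P k n q i j ∧ IsSimpleModule (U k n q) N}

end QFL

namespace QFL

variable (k : Type) [Field k] (n : ℕ) (q : k)

/-- `1_r = (1/n) Σ_{t<n} q̄^{(n-r)t} K^t`. -/
def oneIdem (r : ℕ) : U k n q :=
  (n : k)⁻¹ • ∑ t ∈ Finset.range n, ((q ^ n) ^ ((n - r) * t)) • K k n q ^ t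

/-- `♭ = Σ_{r<n} q^{-r} 1_r` (an invertible element of `u`). -/
def flat : U k n q := ∑ r ∈ Finset.range n, (q⁻¹ ^ r) • oneIdem k n q r

/-- The property that `Δ` is the comultiplication of `ũ_q(sl₂)` (which exists and is the
unique algebra map with these values on the generators). -/
def IsComul (Δ : U k n q →ₐ[k] (U k n q ⊗[k] U k n q)) : Prop :=
  Δ (K k n q) = K k n q ⊗ₜ[k] K k n q ∧
  Δ (Kh k n q) = Kh k n q ⊗ₜ[k] Kh k n q ∧
  Δ (E k n q) = (E k n q ⊗ₜ[k] Ring.inverse (flat k n q)) +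
    (Kinv k n q ⊗ₜ[k] (oneIdem k n q 0 * E k n q)) +
    ((1 : U k n q) ⊗ₜ[k] ((∑ r ∈ Finset.Icc 1 (n - 1), oneIdem k n q r) * E k n q)) ∧
  Δ (F k n q) = (F k n q ⊗ₜ[k] flat k n q) +
    ((Kinv k n q * Kh k n q) ⊗ₜ[k]
      (F k n q * ∑ r ∈ Finset.Icc 1 (n - 1), oneIdem k n q r)) +
    (Kh k n q ⊗ₜ[k] (F k n q * oneIdem k n q 0))

instance (N : Submodule (U k n q) (U k n q)) : SMulCommClass (U k n q) k N := by
  constructor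
  intro a b m
  ext
  show a • b • (m : U k n q) = b • a • (m : U k n q)
  rw [smul_comm]

/-- The `u`-module structure on `M ⊗[k] N` obtained from left `u`-modules `M`, `N` by letting
`u` act through the comultiplication `Δ`. -/
def tensorModule (Δ : U k n q →ₐ[k] (U k n q ⊗[k] U k n q))
    (M N : Type) [AddCommGroup M] [Module k M] [Module (U k n q) M]
    [IsScalarTower k (U k n q) M] [SMulCommClass (U k n q) k M]
    [AddCommGroup N] [Module k N] [Module (U k n q) N]
    [IsScalarTower k (U k n q) N] [SMulCommClass (U k n q) k N] :
    Module (U k n q) (M ⊗[k] N) :=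
  Module.compHom (M ⊗[k] N)
    ((Module.endTensorEndAlgHom (R := k) (S := k) (A := k) (M := M) (N := N)).comp
      ((Algebra.TensorProduct.map (Algebra.lsmul k k M) (Algebra.lsmul k k N)).comp
        Δ)).toRingHom

end QFL

/-!
The lowest weight vectors `w`, `w'` of simple modules `S`, `S'` of dimensions `a`, `b` give a basis
`E ^ r • w ⊗ E ^ s • w'` of `S ⊗ S'`, which is a grid on which `E` and `F` raise and lower one of
the two coordinates, up to scalars. A vector killed by `F` is produced on each level `r + s` of the
grid, and it generates a simple module, unless its weight allows for a partner `y` with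
`E * F * E * F` killing `y`; then the two of them generate a projective module. The identity of
`S ⊗ S'` is therefore a sum of a map with semisimple image and of a map which factors through a
projective module. This property of a module passes to its direct summands, and for an
indecomposable module Fitting's lemma leaves only one of the two maps.
-/

namespace QFL

section SemisimpleAddProjective

universe u v

variable {R : Type u} [Ring R] {M M' M'' : Type v} [AddCommGroup M] [Module R M]
  [AddCommGroup M'] [Module R M'] [AddCommGroup M''] [Module R M'']

theorem isSemisimpleModule_range_zero :
    IsSemisimpleModule R (LinearMap.range (0 : M →ₗ[R] M')) :=
  .of_sSup_simples_eq_top (by rw [LinearMap.range_zero]; exact Subsingleton.elim _ _)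

/-- A linear map that is the sum of a map with semisimple image and a map factoring through a
projective module. For the identity of an indecomposable module of finite length this forces the
module to be simple or projective, and unlike the existence of a decomposition of `M` the
property passes to direct summands by mere composition of maps. -/
def IsSemisimpleAddProjective (f : M →ₗ[R] M') : Prop :=
  ∃ g h : M →ₗ[R] M', f = g + h ∧ IsSemisimpleModule R (LinearMap.range g) ∧
    ∃ (Q : Type v) (_ : AddCommGroup Q) (_ : Module R Q) (i : M →ₗ[R] Q) (p : Q →ₗ[R] M'),
      Module.Projective R Q ∧ h = p ∘ₗ i

namespace IsSemisimpleAddProjective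

theorem zero : IsSemisimpleAddProjective (0 : M →ₗ[R] M') :=
  ⟨0, 0, (add_zero 0).symm, isSemisimpleModule_range_zero, PUnit, inferInstance, inferInstance,
    0, 0, inferInstance, rfl⟩

theorem add {f f' : M →ₗ[R] M'} (hf : IsSemisimpleAddProjective f)
    (hf' : IsSemisimpleAddProjective f') : IsSemisimpleAddProjective (f + f') := by
  obtain ⟨g, _, rfl, hg, Q, _, _, i, p, _, rfl⟩ := hf
  obtain ⟨g', _, rfl, hg', Q', _, _, i', p', _, rfl⟩ := hf'
  have range_le : LinearMap.range (g + g') ≤ LinearMap.range g ⊔ LinearMap.range g' := by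
    rintro _ ⟨x, rfl⟩
    exact Submodule.add_mem_sup ⟨x, rfl⟩ ⟨x, rfl⟩
  have : IsSemisimpleModule R ↥(LinearMap.range g ⊔ LinearMap.range g') := .sup hg hg'
  refine ⟨g + g', p ∘ₗ i + p' ∘ₗ i', add_add_add_comm .., ?_, Q × Q', inferInstance,
    inferInstance, i.prod i', p.coprod p', inferInstance, rfl⟩
  exact .of_injective (Submodule.inclusion range_le) (Submodule.inclusion_injective range_le)

theorem sum {ι : Type*} (s : Finset ι) {f : ι → M →ₗ[R] M'}
    (hf : ∀ i ∈ s, IsSemisimpleAddProjective (f i)) :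
    IsSemisimpleAddProjective (∑ i ∈ s, f i) :=
  Finset.sum_induction f _ (fun _ _ => add) zero hf

theorem comp_left {f : M →ₗ[R] M'} (hf : IsSemisimpleAddProjective f) (φ : M' →ₗ[R] M'') :
    IsSemisimpleAddProjective (φ ∘ₗ f) := by
  obtain ⟨g, _, rfl, hg, Q, _, _, i, p, _, rfl⟩ := hf
  refine ⟨φ ∘ₗ g, φ ∘ₗ p ∘ₗ i, LinearMap.comp_add .., ?_, Q, _, _, i, φ ∘ₗ p, ‹_›, rfl⟩
  rw [LinearMap.range_comp]
  exact .of_surjective (φ.submoduleMap _) (LinearMap.submoduleMap_surjective _ _)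

theorem comp_right {f : M' →ₗ[R] M''} (hf : IsSemisimpleAddProjective f) (φ : M →ₗ[R] M') :
    IsSemisimpleAddProjective (f ∘ₗ φ) := by
  obtain ⟨g, _, rfl, hg, Q, _, _, i, p, _, rfl⟩ := hf
  have range_le := LinearMap.range_comp_le_range φ g
  exact ⟨g ∘ₗ φ, p ∘ₗ i ∘ₗ φ, rfl,
    .of_injective (Submodule.inclusion range_le) (Submodule.inclusion_injective range_le),
    Q, _, _, i ∘ₗ φ, p, ‹_›, rfl⟩

theorem id_of_isSemisimpleModule [IsSemisimpleModule R M] :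
    IsSemisimpleAddProjective (LinearMap.id : M →ₗ[R] M) :=
  ⟨.id, 0, (add_zero _).symm, inferInstance, PUnit, inferInstance, inferInstance, 0, 0,
    inferInstance, rfl⟩

theorem id_of_projective [Module.Projective R M] :
    IsSemisimpleAddProjective (LinearMap.id : M →ₗ[R] M) :=
  ⟨0, .id, (zero_add _).symm, isSemisimpleModule_range_zero, M, _, _, .id, .id, ‹_›, rfl⟩

theorem id_of_comp_eq_id {i : M' →ₗ[R] M} {p : M →ₗ[R] M'} (h : p ∘ₗ i = .id)
    (hM : IsSemisimpleAddProjective (LinearMap.id : M →ₗ[R] M)) :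
    IsSemisimpleAddProjective (LinearMap.id : M' →ₗ[R] M') :=
  h ▸ (hM.comp_left p).comp_right i

end IsSemisimpleAddProjective

theorem isUnit_or_isNilpotent_of_indecomposable [IsArtinian R M] [IsNoetherian R M]
    (hM : ∀ A B : Submodule R M, IsCompl A B → A = ⊥ ∨ B = ⊥) (f : Module.End R M) :
    IsUnit f ∨ IsNilpotent f := by
  obtain ⟨m, hm⟩ := Filter.eventually_atTop.1 f.eventually_isCompl_ker_pow_range_pow
  have isCompl := hm (m + 1) m.le_succ
  rcases hM _ _ isCompl with ker_eq | range_eq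
  · have range_eq : LinearMap.range (f ^ (m + 1)) = ⊤ := by
      simpa only [ker_eq, bot_sup_eq] using isCompl.sup_eq_top
    exact .inl <| isUnit_pow_succ_iff.1 <| (Module.End.isUnit_iff _).2
      ⟨LinearMap.ker_eq_bot.1 ker_eq, LinearMap.range_eq_top.1 range_eq⟩
  · exact .inr ⟨m + 1, LinearMap.range_eq_bot.1 range_eq⟩

theorem isSimpleModule_of_isSemisimpleModule_of_indecomposable [IsSemisimpleModule R M]
    [Nontrivial M] (hM : ∀ A B : Submodule R M, IsCompl A B → A = ⊥ ∨ B = ⊥) :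
    IsSimpleModule R M where
  eq_bot_or_eq_top A := by
    obtain ⟨B, hAB⟩ := exists_isCompl A
    refine (hM A B hAB).imp id fun hB => ?_
    simpa only [hB, sup_bot_eq] using hAB.sup_eq_top

theorem isSimpleModule_or_projective_of_indecomposable [IsArtinian R M] [IsNoetherian R M]
    [Nontrivial M] (hM : ∀ A B : Submodule R M, IsCompl A B → A = ⊥ ∨ B = ⊥)
    (hid : IsSemisimpleAddProjective (LinearMap.id : M →ₗ[R] M)) :
    IsSimpleModule R M ∨ Module.Projective R M := by
  obtain ⟨g, _, id_eq, hg, Q, _, _, i, p, _, rfl⟩ := hid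
  rcases isUnit_or_isNilpotent_of_indecomposable hM g with isUnit | isNilpotent
  · have : IsSemisimpleModule R M := .of_surjective (LinearMap.range g).subtype <| by
      rw [← LinearMap.range_eq_top, Submodule.range_subtype, LinearMap.range_eq_top]
      exact ((Module.End.isUnit_iff g).1 isUnit).2
    exact .inl (isSimpleModule_of_isSemisimpleModule_of_indecomposable hM)
  · have isUnit : IsUnit (p ∘ₗ i : Module.End R M) := by
      rw [show (p ∘ₗ i : Module.End R M) = 1 - g from (sub_eq_of_eq_add' id_eq).symm]
      exact isNilpotent.isUnit_one_sub
    obtain ⟨r, hr⟩ := isUnit.exists_left_inv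
    exact .inr (Module.Projective.of_split i (r ∘ₗ p) hr)

end SemisimpleAddProjective

section RootIdempotent

variable {k R M : Type*} [Field k] [Ring R] [Algebra k R] [AddCommGroup M] [Module k M]
  [Module R M] [IsScalarTower k R M] {ζ : k} {n : ℕ} {T : R}

theorem geom_sum_eq_zero_of_pow_eq_one {x : k} (hx : x ^ n = 1) (hx1 : x ≠ 1) :
    ∑ t ∈ Finset.range n, x ^ t = 0 := by
  have := mul_geom_sum x n
  rw [hx, sub_self] at this
  exact (mul_eq_zero.1 this).resolve_left (sub_ne_zero.2 hx1)

/-- The idempotent projecting onto the `ζ ^ r`-eigenspace of an element `T` with `T ^ n = 1`, for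
a primitive `n`-th root of unity `ζ`. The exponent `n - r` makes the coefficients literally those
of `oneIdem`. -/
def rootIdem (ζ : k) (n : ℕ) (T : R) (r : ℕ) : R :=
  (n : k)⁻¹ • ∑ t ∈ Finset.range n, ζ ^ ((n - r) * t) • T ^ t

theorem pow_smul_of_smul_eq {c : k} {m : M} (h : T • m = c • m) (t : ℕ) :
    T ^ t • m = c ^ t • m := by
  induction t with
  | zero => rw [pow_zero, pow_zero, one_smul, one_smul]
  | succ t ih =>
    rw [pow_succ, mul_smul, h, ← algebraMap_smul R c m, ← mul_smul, ← Algebra.commutes, mul_smul,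
      ih, algebraMap_smul, smul_smul, ← pow_succ']

theorem rootIdem_smul_of_smul_eq (hζ : IsPrimitiveRoot ζ n) {r s : ℕ} (hr : r < n) (hs : s < n)
    {m : M} (h : T • m = ζ ^ s • m) : rootIdem ζ n T r • m = if r = s then m else 0 := by
  have : NeZero n := ⟨by omega⟩
  have : NeZero (n : k) := hζ.neZero'
  have geom : rootIdem ζ n T r • m =
      ((n : k)⁻¹ * ∑ t ∈ Finset.range n, (ζ ^ (n - r + s)) ^ t) • m := by
    rw [rootIdem, smul_assoc, Finset.sum_smul, mul_smul, Finset.sum_smul]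
    refine congrArg _ (Finset.sum_congr rfl fun t _ => ?_)
    rw [smul_assoc, pow_smul_of_smul_eq h, smul_smul, ← pow_mul, ← pow_mul, ← pow_add, ← add_mul]
  rw [geom]
  split_ifs with hrs
  · simp [hrs, Nat.sub_add_cancel hs.le, hζ.pow_eq_one, NeZero.ne (n : k)]
  · rw [geom_sum_eq_zero_of_pow_eq_one, mul_zero, zero_smul]
    · rw [← pow_mul, mul_comm, pow_mul, hζ.pow_eq_one, one_pow]
    · rw [Ne, hζ.pow_eq_one_iff_dvd]
      intro hdvd
      have := Nat.eq_of_dvd_of_lt_two_mul (by omega) hdvd (by omega)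
      omega

theorem mul_rootIdem (hζ : ζ ^ n = 1) (hT : T ^ n = 1) {r : ℕ} (hr : r ≤ n) :
    T * rootIdem ζ n T r = ζ ^ r • rootIdem ζ n T r := by
  have shift : ζ ^ (n - r) • (T * rootIdem ζ n T r) = rootIdem ζ n T r := by
    rw [rootIdem, mul_smul_comm, smul_comm, Finset.mul_sum, Finset.smul_sum]
    have := (Finset.sum_range_succ' (fun t => ζ ^ ((n - r) * t) • T ^ t) n).symm.trans
      (Finset.sum_range_succ _ n)
    rw [mul_zero, pow_zero, pow_zero, mul_comm, pow_mul, hζ, one_pow, hT, add_left_inj] at this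
    rw [← this]
    refine congrArg _ (Finset.sum_congr rfl fun t _ => ?_)
    rw [mul_smul_comm, smul_smul, ← pow_add, ← pow_succ', Nat.mul_succ, add_comm]
  rw [← one_smul k (T * _), ← hζ, ← Nat.add_sub_cancel' hr, pow_add, Nat.add_sub_cancel' hr,
    mul_smul, shift]

theorem sum_rootIdem [NeZero n] (hζ : IsPrimitiveRoot ζ n) :
    ∑ r ∈ Finset.range n, rootIdem ζ n T r = 1 := by
  have : NeZero (n : k) := hζ.neZero'
  have coeff (t : ℕ) (ht : t ∈ Finset.range n) :
      ∑ r ∈ Finset.range n, ζ ^ ((n - r) * t) = if t = 0 then (n : k) else 0 := by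
    split_ifs with ht0
    · simp [ht0]
    · calc ∑ r ∈ Finset.range n, ζ ^ ((n - r) * t)
        _ = ∑ r ∈ Finset.range n, ζ ^ t * (ζ ^ t) ^ (n - 1 - r) :=
          Finset.sum_congr rfl fun r hr => by
            rw [← pow_succ', ← pow_mul, mul_comm]
            congr 2
            have := Finset.mem_range.1 hr
            omega
        _ = ζ ^ t * ∑ r ∈ Finset.range n, (ζ ^ t) ^ r := by
          rw [Finset.sum_range_reflect fun r => ζ ^ t * (ζ ^ t) ^ r, Finset.mul_sum]
        _ = 0 := by
          rw [geom_sum_eq_zero_of_pow_eq_one, mul_zero]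
          · rw [← pow_mul, mul_comm, pow_mul, hζ.pow_eq_one, one_pow]
          · exact hζ.pow_ne_one_of_pos_of_lt ht0 (Finset.mem_range.1 ht)
  simp_rw [rootIdem, ← Finset.smul_sum]
  rw [Finset.sum_comm]
  simp_rw [← Finset.sum_smul]
  rw [Finset.sum_congr rfl fun t ht => by rw [coeff t ht]]
  simp [NeZero.pos n, NeZero.ne (n : k), smul_smul]

theorem commute_rootIdem {x : R} (h : Commute x T) (r : ℕ) : Commute x (rootIdem ζ n T r) :=
  .smul_right (.sum_right _ _ _ fun t _ => (h.pow_right t).smul_right _) _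

end RootIdempotent

section LoweringChain

variable {k R M : Type*} [Field k] [Monoid R] [AddCommGroup M] [Module k M] [DistribMulAction R M]

/-- A sequence of vectors `x 0, …, x (len - 1)` that an operator `F` annihilating `x 0` lowers to
`x 0`: up to a nonzero scalar, `j` applications of `F` turn `x j` into `x 0`. Unlike for a Jordan
chain, `F • x (j + 1)` may differ from a multiple of `x j` by a vector that `F ^ j` kills. -/
structure IsLoweringChain (k : Type*) {R M : Type*} [Field k] [Monoid R] [AddCommGroup M]
    [Module k M] [DistribMulAction R M] (F : R) (x : ℕ → M) (len : ℕ) : Prop where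
  smul_bottom : F • x 0 = 0
  exists_pow_smul_eq : ∀ j < len, ∃ c : k, c ≠ 0 ∧ F ^ j • x j = c • x 0

namespace IsLoweringChain

theorem of_step {F : R} {x : ℕ → M} {len : ℕ} (h0 : F • x 0 = 0)
    (step : ∀ j, j + 1 < len → ∃ c : k, c ≠ 0 ∧ F ^ (j + 1) • x (j + 1) = c • F ^ j • x j) :
    IsLoweringChain k F x len where
  smul_bottom := h0
  exists_pow_smul_eq j := by
    induction j with
    | zero => exact fun _ => ⟨1, one_ne_zero, by rw [pow_zero, one_smul, one_smul]⟩
    | succ j ih =>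
      intro hj
      obtain ⟨c, hc, e⟩ := step j hj
      obtain ⟨d, hd, e'⟩ := ih (by omega)
      exact ⟨c * d, mul_ne_zero hc hd, by rw [e, e', smul_smul]⟩

variable [SMulCommClass R k M]

theorem pow_smul_eq_zero {F : R} {x : ℕ → M} {len : ℕ} (hx : IsLoweringChain k F x len) {j m : ℕ}
    (hj : j < len) (hm : j < m) : F ^ m • x j = 0 := by
  obtain ⟨c, -, hc⟩ := hx.exists_pow_smul_eq j hj
  obtain ⟨d, rfl⟩ := Nat.exists_eq_add_of_lt hm
  rw [show j + d + 1 = d + 1 + j by omega, pow_add, mul_smul, hc, pow_succ, mul_smul,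
    smul_comm F c, hx.smul_bottom, smul_zero, smul_zero]

theorem append {F : R} {x y : ℕ → M} {a b : ℕ} (hx : IsLoweringChain k F x a) (ha : 0 < a)
    {c₀ : k} (hc₀ : c₀ ≠ 0) (h0 : F • y 0 = c₀ • x (a - 1))
    (step : ∀ j, j + 1 < b → ∃ c : k, c ≠ 0 ∧
      F ^ (a + j + 1) • y (j + 1) = c • F ^ (a + j) • y j) :
    IsLoweringChain k F (fun j => if j < a then x j else y (j - a)) (a + b) := by
  have step_zero : F ^ a • y 0 = c₀ • F ^ (a - 1) • x (a - 1) := by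
    rw [← smul_comm, ← h0, ← mul_smul, ← pow_succ, Nat.sub_add_cancel ha]
  have hy (j : ℕ) (hj : j < b) : ∃ c : k, c ≠ 0 ∧ F ^ (a + j) • y j = c • x 0 := by
    induction j with
    | zero =>
      obtain ⟨c, hc, e⟩ := hx.exists_pow_smul_eq (a - 1) (by omega)
      exact ⟨c₀ * c, mul_ne_zero hc₀ hc, by rw [add_zero, step_zero, e, smul_smul]⟩
    | succ j ih =>
      obtain ⟨c, hc, e⟩ := step j hj
      obtain ⟨d, hd, e'⟩ := ih (by omega)
      exact ⟨c * d, mul_ne_zero hc hd, by rw [← add_assoc, e, e', smul_smul]⟩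
  refine ⟨by simpa only [ha, if_true] using hx.smul_bottom, fun j hj => ?_⟩
  simp only [ha, if_true]
  split_ifs with hja
  · exact hx.exists_pow_smul_eq j hja
  · simpa only [Nat.add_sub_cancel' (not_lt.1 hja)] using hy (j - a) (by omega)

/-- The vectors of maximal height in the sum survive and all the others are killed. -/
theorem exists_pow_smul_sum_eq {F : R} {ι : Type*} [Fintype ι] {len : ι → ℕ} {x : ι → ℕ → M}
    (hx : ∀ i, IsLoweringChain k F (x i) (len i)) {g : (Σ i, Fin (len i)) → k} (hg : g ≠ 0) :
    ∃ (J : ℕ) (h : ι → k), h ≠ 0 ∧ F ^ J • ∑ p, g p • x p.1 p.2 = ∑ i, h i • x i 0 := by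
  classical
  obtain ⟨p₀, hp₀⟩ := Function.ne_iff.1 hg
  obtain ⟨⟨i₀, j₀⟩, hmem, hmax⟩ := Finset.exists_max_image
    (Finset.univ.filter (g · ≠ 0)) (fun p => (p.2 : ℕ)) ⟨p₀, by simpa using hp₀⟩
  simp only [Finset.mem_filter, Finset.mem_univ, true_and] at hmem hmax
  choose d hd hdx using fun i => (hx i).exists_pow_smul_eq
  refine ⟨j₀, fun i => if hi : (j₀ : ℕ) < len i then g ⟨i, j₀, hi⟩ * d i j₀ hi else 0,
    Function.ne_iff.2 ⟨i₀, ?_⟩, ?_⟩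
  · simpa using ⟨hmem, hd i₀ j₀ j₀.2⟩
  rw [Fintype.sum_sigma, Finset.smul_sum]
  refine Finset.sum_congr rfl fun i _ => ?_
  have off_top (j : Fin (len i)) (hj : (j : ℕ) ≠ j₀) : F ^ (j₀ : ℕ) • g ⟨i, j⟩ • x i j = 0 := by
    rcases lt_or_gt_of_ne hj with hlt | hgt
    · rw [smul_comm, (hx i).pow_smul_eq_zero j.2 hlt, smul_zero]
    · rw [not_not.1 fun h => hgt.not_ge (hmax ⟨i, j⟩ h), zero_smul, smul_zero]
  rw [Finset.smul_sum]
  dsimp only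
  split_ifs with hi
  · rw [Finset.sum_eq_single ⟨j₀, hi⟩ (fun j _ hj => off_top j fun h => hj (Fin.ext h)) (by simp),
      smul_comm, hdx, smul_smul]
  · rw [zero_smul]
    exact Finset.sum_eq_zero fun j _ => off_top j fun h => hi (h ▸ j.2)

theorem linearIndependent {F : R} {ι : Type*} [Finite ι] {len : ι → ℕ} {x : ι → ℕ → M}
    (hx : ∀ i, IsLoweringChain k F (x i) (len i)) (h0 : LinearIndependent k fun i => x i 0) :
    LinearIndependent k fun p : Σ i, Fin (len i) => x p.1 p.2 := by
  cases nonempty_fintype ι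
  refine Fintype.linearIndependent_iff.2 fun g hg => ?_
  by_contra! hne
  obtain ⟨J, h, hh, e⟩ := exists_pow_smul_sum_eq hx (Function.ne_iff.2 hne)
  rw [hg, smul_zero] at e
  exact hh (funext (Fintype.linearIndependent_iff.1 h0 h e.symm))

end IsLoweringChain

end LoweringChain

theorem pow_smul_eq_zero_of_le {R M : Type*} [Monoid R] [AddMonoid M] [DistribMulAction R M] {x : R}
    {v : M} {i j : ℕ} (hij : i ≤ j) (h : x ^ i • v = 0) : x ^ j • v = 0 := by
  rw [← Nat.sub_add_cancel hij, pow_add, mul_smul, h, smul_zero]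

/-- A system of generators of the `k`-algebra `R` satisfying the relations of `ũ_q(sl₂)` that
matter for its representations. In `U k n q` the root of unity has order `N = n ^ 2`, the scalar
`qb` is `q ^ n`, and `G` is `K⁻¹K̂`, which makes the `E`-`F` commutation relation linear in `G`. -/
structure SmallQuantumSl2 (k R : Type*) [Field k] [Ring R] [Algebra k R] where
  (N : ℕ) (q qb : k) (K G E F : R)
  one_lt : 1 < N
  isPrimitiveRoot : IsPrimitiveRoot q N
  qb_ne_zero : qb ≠ 0
  K_mul_G : K * G = G * K
  K_mul_E : K * E = qb • (E * K)
  K_mul_F : K * F = qb⁻¹ • (F * K)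
  G_mul_E : G * E = (q ^ 2)⁻¹ • (E * G)
  G_mul_F : G * F = q ^ 2 • (F * G)
  F_mul_E : F * E = q⁻¹ • (E * F) + 1 - G
  E_pow : E ^ N = 0
  F_pow : F ^ N = 0
  K_pow : K ^ N = 1
  G_pow : G ^ N = 1
  adjoin_eq_top : Algebra.adjoin k {K, G, E, F} = ⊤

namespace SmallQuantumSl2

variable {k R M : Type*} [Field k] [Ring R] [Algebra k R] [AddCommGroup M] [Module k M]
  [Module R M] (A : SmallQuantumSl2 k R)

theorem q_ne_zero : A.q ≠ 0 :=
  A.isPrimitiveRoot.ne_zero (by have := A.one_lt; omega)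

theorem q_pow_ne_one {j : ℕ} (hj : 0 < j) (hjN : j < A.N) : A.q ^ j ≠ 1 :=
  A.isPrimitiveRoot.pow_ne_one_of_pos_of_lt hj.ne' hjN

theorem one_sub_q_ne_zero : 1 - A.q ≠ 0 :=
  sub_ne_zero.2 (A.isPrimitiveRoot.ne_one A.one_lt).symm

theorem q_pow_inj {i j : ℕ} (hi : i < A.N) (hj : j < A.N) (h : A.q ^ i = A.q ^ j) : i = j :=
  A.isPrimitiveRoot.pow_inj hi hj h

theorem E_pow_eq_zero {j : ℕ} (hj : A.N ≤ j) : A.E ^ j = 0 :=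
  pow_eq_zero_of_le hj A.E_pow

section WeightSpace

variable [IsScalarTower k R M]

/-- The common eigenspace of `K` and `G` for the eigenvalues `κ` and `l`. -/
def weightSpace (κ l : k) : Submodule k M where
  carrier := {v | A.K • v = κ • v ∧ A.G • v = l • v}
  add_mem' hv hw := ⟨by rw [smul_add, hv.1, hw.1, smul_add], by rw [smul_add, hv.2, hw.2, smul_add]⟩
  zero_mem' := ⟨by rw [smul_zero, smul_zero], by rw [smul_zero, smul_zero]⟩
  smul_mem' c v hv := ⟨by rw [smul_comm, hv.1, smul_comm], by rw [smul_comm, hv.2, smul_comm]⟩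

variable {A} {κ l : k} {v : M}

theorem mem_weightSpace : v ∈ A.weightSpace κ l ↔ A.K • v = κ • v ∧ A.G • v = l • v := Iff.rfl

theorem E_smul_mem_weightSpace (hv : v ∈ A.weightSpace κ l) :
    A.E • v ∈ A.weightSpace (M := M) (A.qb * κ) ((A.q ^ 2)⁻¹ * l) := by
  obtain ⟨hK, hG⟩ := hv
  constructor
  · rw [← mul_smul, A.K_mul_E, smul_assoc, mul_smul, hK, smul_comm A.E, smul_smul]
  · rw [← mul_smul, A.G_mul_E, smul_assoc, mul_smul, hG, smul_comm A.E, smul_smul]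

theorem F_smul_mem_weightSpace (hv : v ∈ A.weightSpace κ l) :
    A.F • v ∈ A.weightSpace (M := M) (A.qb⁻¹ * κ) (A.q ^ 2 * l) := by
  obtain ⟨hK, hG⟩ := hv
  constructor
  · rw [← mul_smul, A.K_mul_F, smul_assoc, mul_smul, hK, smul_comm A.F, smul_smul]
  · rw [← mul_smul, A.G_mul_F, smul_assoc, mul_smul, hG, smul_comm A.F, smul_smul]

theorem E_pow_smul_mem_weightSpace (hv : v ∈ A.weightSpace κ l) (j : ℕ) :
    A.E ^ j • v ∈ A.weightSpace (M := M) (A.qb ^ j * κ) ((A.q ^ 2)⁻¹ ^ j * l) := by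
  induction j with
  | zero => simpa only [pow_zero, one_smul, one_mul] using hv
  | succ j ih =>
    simpa only [pow_succ', mul_smul, mul_assoc] using E_smul_mem_weightSpace ih

theorem F_pow_smul_mem_weightSpace (hv : v ∈ A.weightSpace κ l) (j : ℕ) :
    A.F ^ j • v ∈ A.weightSpace (M := M) (A.qb⁻¹ ^ j * κ) ((A.q ^ 2) ^ j * l) := by
  induction j with
  | zero => simpa only [pow_zero, one_smul, one_mul] using hv
  | succ j ih =>
    simpa only [pow_succ', mul_smul, mul_assoc] using F_smul_mem_weightSpace ih

theorem exists_eq_pow_of_mem_weightSpace (hv : v ∈ A.weightSpace κ l) (hv0 : v ≠ 0) :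
    (∃ r < A.N, A.q ^ r = κ) ∧ ∃ s < A.N, A.q ^ s = l := by
  have : NeZero A.N := ⟨by have := A.one_lt; omega⟩
  have eigenvalue_pow {T : R} (hT : T ^ A.N = 1) {c : k} (h : T • v = c • v) : c ^ A.N = 1 :=
    smul_left_injective k hv0 <| by
      simpa only [hT, one_smul] using (pow_smul_of_smul_eq h A.N).symm
  exact ⟨A.isPrimitiveRoot.eq_pow_of_pow_eq_one (eigenvalue_pow A.K_pow hv.1),
    A.isPrimitiveRoot.eq_pow_of_pow_eq_one (eigenvalue_pow A.G_pow hv.2)⟩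

theorem ne_zero_of_mem_weightSpace (hv : v ∈ A.weightSpace κ l) (hv0 : v ≠ 0) :
    κ ≠ 0 ∧ l ≠ 0 := by
  obtain ⟨⟨r, _, rfl⟩, s, _, rfl⟩ := exists_eq_pow_of_mem_weightSpace hv hv0
  exact ⟨pow_ne_zero r A.q_ne_zero, pow_ne_zero s A.q_ne_zero⟩

variable (A)

/-- The idempotent projecting onto the weight space for `(q ^ r, q ^ s)`. -/
def weightIdem (r s : ℕ) : R := rootIdem A.q A.N A.K r * rootIdem A.q A.N A.G s

theorem sum_weightIdem :
    ∑ r ∈ Finset.range A.N, ∑ s ∈ Finset.range A.N, A.weightIdem r s = 1 := by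
  have : NeZero A.N := ⟨by have := A.one_lt; omega⟩
  simp only [weightIdem, ← Finset.mul_sum, sum_rootIdem A.isPrimitiveRoot,
    mul_one]

theorem weightIdem_smul_mem_weightSpace {r s : ℕ} (hr : r < A.N) (hs : s < A.N) (m : M) :
    A.weightIdem r s • m ∈ A.weightSpace (M := M) (A.q ^ r) (A.q ^ s) := by
  have hq := A.isPrimitiveRoot.pow_eq_one
  constructor
  · rw [weightIdem, ← mul_smul, ← mul_assoc, mul_rootIdem hq A.K_pow hr.le, smul_mul_assoc,
      smul_assoc]
  · rw [weightIdem, ← mul_smul, ← mul_assoc,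
      (commute_rootIdem (show Commute A.G A.K from A.K_mul_G.symm) r).eq, mul_assoc,
      mul_rootIdem hq A.G_pow hs.le, mul_smul_comm, smul_assoc]

theorem weightIdem_smul_of_mem_weightSpace {r s : ℕ} (hr : r < A.N) (hs : s < A.N)
    (hv : v ∈ A.weightSpace (A.q ^ r) (A.q ^ s)) : A.weightIdem r s • v = v := by
  rw [weightIdem, mul_smul, rootIdem_smul_of_smul_eq A.isPrimitiveRoot hs hs hv.2, if_pos rfl,
    rootIdem_smul_of_smul_eq A.isPrimitiveRoot hr hr hv.1, if_pos rfl]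

theorem exists_weightIdem_smul_ne_zero {M : Type*} [AddCommGroup M] [Module R M] {m : M}
    (hm : m ≠ 0) :
    ∃ r < A.N, ∃ s < A.N, A.weightIdem r s • m ≠ 0 := by
  by_contra! h
  refine hm ?_
  rw [← one_smul R m, ← A.sum_weightIdem]
  simp only [Finset.sum_smul]
  exact Finset.sum_eq_zero fun r hr => Finset.sum_eq_zero fun s hs =>
    h r (Finset.mem_range.1 hr) s (Finset.mem_range.1 hs)

end WeightSpace

section RaisingSpan

variable {ι : Type*}

/-- The `k`-span of all the vectors `E ^ j • z i`. It is a submodule over the whole algebra as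
soon as the `z i` are weight vectors and it contains all `F • z i`. -/
def raisingSpan (z : ι → M) : Submodule k M :=
  Submodule.span k (Set.range fun p : ι × ℕ => A.E ^ p.2 • z p.1)

variable {A} {z : ι → M} {κ l : k} {v : M}

theorem E_pow_smul_mem_raisingSpan (i : ι) (j : ℕ) : A.E ^ j • z i ∈ A.raisingSpan z :=
  Submodule.subset_span ⟨(i, j), rfl⟩

theorem mem_raisingSpan_self (i : ι) : z i ∈ A.raisingSpan z := by
  simpa only [pow_zero, one_smul] using A.E_pow_smul_mem_raisingSpan (z := z) i 0

theorem raisingSpan_le_span_fin {len : ι → ℕ} (hlen : ∀ i, A.E ^ len i • z i = 0) :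
    A.raisingSpan z ≤
      Submodule.span k (Set.range fun p : Σ i, Fin (len i) => A.E ^ (p.2 : ℕ) • z p.1) := by
  refine Submodule.span_le.2 ?_
  rintro _ ⟨⟨i, j⟩, rfl⟩
  by_cases hj : j < len i
  · exact Submodule.subset_span ⟨⟨i, j, hj⟩, rfl⟩
  · dsimp only
    rw [pow_smul_eq_zero_of_le (not_lt.1 hj) (hlen i)]
    exact Submodule.zero_mem _

variable [IsScalarTower k R M]

variable (A) in
/-- The coefficient of `E ^ (m - 1) • v` in `F • E ^ m • v`, for `v` of `G`-weight `l`. -/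
def loweringCoeff (l : k) (m : ℕ) : k :=
  A.q * (1 - A.q ^ m) * (A.q ^ m - l * A.q) / ((1 - A.q) * A.q ^ (2 * m))

theorem loweringCoeff_ne_zero {m : ℕ} (hm : A.q ^ m ≠ 1) (hl : A.q ^ m ≠ l * A.q) :
    A.loweringCoeff l m ≠ 0 :=
  div_ne_zero
    (mul_ne_zero (mul_ne_zero A.q_ne_zero (sub_ne_zero.2 hm.symm)) (sub_ne_zero.2 hl))
    (mul_ne_zero A.one_sub_q_ne_zero (pow_ne_zero _ A.q_ne_zero))

theorem loweringCoeff_eq_zero {m : ℕ} (hl : l * A.q = A.q ^ m) : A.loweringCoeff l m = 0 := by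
  rw [loweringCoeff, hl, sub_self, mul_zero, zero_div]

theorem loweringCoeff_succ (l : k) (m : ℕ) : A.loweringCoeff l (m + 1) =
    A.q⁻¹ * A.loweringCoeff l m + 1 - (A.q ^ 2)⁻¹ ^ m * l := by
  have := A.q_ne_zero
  have := A.one_sub_q_ne_zero
  simp only [loweringCoeff, inv_pow, ← pow_mul]
  field_simp
  ring

theorem F_smul_E_pow_succ_smul (hv : v ∈ A.weightSpace κ l) (m : ℕ) :
    A.F • A.E ^ (m + 1) • v =
      A.q⁻¹ ^ (m + 1) • A.E ^ (m + 1) • A.F • v + A.loweringCoeff l (m + 1) • A.E ^ m • v := by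
  have F_smul_E_smul (u : M) : A.F • A.E • u = A.q⁻¹ • A.E • A.F • u + u - A.G • u := by
    rw [← mul_smul, A.F_mul_E, sub_smul, add_smul, smul_assoc, one_smul, mul_smul]
  have ih : A.q⁻¹ • A.E • A.F • A.E ^ m • v =
      A.q⁻¹ ^ (m + 1) • A.E ^ (m + 1) • A.F • v +
        (A.q⁻¹ * A.loweringCoeff l m) • A.E ^ m • v := by
    cases m with
    | zero => simp [loweringCoeff]
    | succ m =>
      rw [F_smul_E_pow_succ_smul hv m, smul_add, smul_comm A.E (A.q⁻¹ ^ (m + 1)),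
        smul_comm A.E (A.loweringCoeff l (m + 1)), ← mul_smul A.E, ← mul_smul A.E, ← pow_succ',
        ← pow_succ', smul_add, smul_smul, smul_smul A.q⁻¹ (A.loweringCoeff _ _), ← pow_succ']
  rw [pow_succ' A.E, mul_smul, F_smul_E_smul, (E_pow_smul_mem_weightSpace hv m).2, ih,
    loweringCoeff_succ, sub_smul, add_smul, one_smul, pow_succ' A.E, add_sub_assoc, add_assoc,
    add_sub_assoc]

theorem smul_mem_of_stable {W : Submodule k M} (hK : ∀ v ∈ W, A.K • v ∈ W)
    (hG : ∀ v ∈ W, A.G • v ∈ W) (hE : ∀ v ∈ W, A.E • v ∈ W) (hF : ∀ v ∈ W, A.F • v ∈ W)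
    (r : R) {v : M} (hv : v ∈ W) : r • v ∈ W := by
  have hr : r ∈ Algebra.adjoin k {A.K, A.G, A.E, A.F} := A.adjoin_eq_top ▸ Algebra.mem_top
  induction hr using Algebra.adjoin_induction generalizing v with
  | mem x hx =>
    rcases hx with rfl | rfl | rfl | rfl
    exacts [hK v hv, hG v hv, hE v hv, hF v hv]
  | algebraMap c => rw [algebraMap_smul]; exact W.smul_mem c hv
  | add x y _ _ hx hy => rw [add_smul]; exact W.add_mem (hx hv) (hy hv)
  | mul x y _ _ hx hy => rw [mul_smul]; exact hx (hy hv)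

theorem smul_mem_raisingSpan_of_forall {x : R}
    (h : ∀ i j, x • A.E ^ j • z i ∈ A.raisingSpan z) {y : M} (hy : y ∈ A.raisingSpan z) :
    x • y ∈ A.raisingSpan z := by
  induction hy using Submodule.span_induction with
  | mem _ hu => obtain ⟨⟨i, j⟩, rfl⟩ := hu; exact h i j
  | zero => rw [smul_zero]; exact Submodule.zero_mem _
  | add u u' _ _ hu hu' => rw [smul_add]; exact Submodule.add_mem _ hu hu'
  | smul c u _ hu => rw [smul_comm]; exact Submodule.smul_mem _ c hu

theorem E_pow_smul_mem_raisingSpan_of_mem (m : ℕ) {y : M} (hy : y ∈ A.raisingSpan z) :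
    A.E ^ m • y ∈ A.raisingSpan z :=
  smul_mem_raisingSpan_of_forall
    (fun i j => by rw [← mul_smul, ← pow_add]; exact E_pow_smul_mem_raisingSpan i _) hy

theorem smul_mem_raisingSpan {κ l : ι → k} (hz : ∀ i, z i ∈ A.weightSpace (κ i) (l i))
    (hF : ∀ i, A.F • z i ∈ A.raisingSpan z) (r : R) {y : M} (hy : y ∈ A.raisingSpan z) :
    r • y ∈ A.raisingSpan z := by
  refine smul_mem_of_stable (fun _ => smul_mem_raisingSpan_of_forall fun i j => ?_)
    (fun _ => smul_mem_raisingSpan_of_forall fun i j => ?_)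
    (fun v hv => by simpa only [pow_one] using E_pow_smul_mem_raisingSpan_of_mem 1 hv)
    (fun _ => smul_mem_raisingSpan_of_forall fun i j => ?_) r hy
  · rw [(E_pow_smul_mem_weightSpace (hz i) j).1]
    exact Submodule.smul_mem _ _ (E_pow_smul_mem_raisingSpan i j)
  · rw [(E_pow_smul_mem_weightSpace (hz i) j).2]
    exact Submodule.smul_mem _ _ (E_pow_smul_mem_raisingSpan i j)
  · cases j with
    | zero => simpa only [pow_zero, one_smul] using hF i
    | succ j =>
      rw [F_smul_E_pow_succ_smul (hz i)]
      exact Submodule.add_mem _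
        (Submodule.smul_mem _ _ (E_pow_smul_mem_raisingSpan_of_mem _ (hF i)))
        (Submodule.smul_mem _ _ (E_pow_smul_mem_raisingSpan i j))

theorem span_singleton_le_span_fin {κ l : ι → k} (hz : ∀ i, z i ∈ A.weightSpace (κ i) (l i))
    (hF : ∀ i, A.F • z i ∈ A.raisingSpan z) {len : ι → ℕ} (hlen : ∀ i, A.E ^ len i • z i = 0)
    {y : M} (hy : y ∈ A.raisingSpan z) : (Submodule.span R {y}).restrictScalars k ≤
      Submodule.span k (Set.range fun p : Σ i, Fin (len i) => A.E ^ (p.2 : ℕ) • z p.1) := by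
  intro u hu
  obtain ⟨r, rfl⟩ := Submodule.mem_span_singleton.1 hu
  exact raisingSpan_le_span_fin hlen (smul_mem_raisingSpan hz hF r hy)

theorem finite_span_singleton [Finite ι] {κ l : ι → k}
    (hz : ∀ i, z i ∈ A.weightSpace (κ i) (l i)) (hF : ∀ i, A.F • z i ∈ A.raisingSpan z) {y : M}
    (hy : y ∈ A.raisingSpan z) : Module.Finite k (Submodule.span R {y}) := by
  have le := span_singleton_le_span_fin hz hF (len := fun _ => A.N)
    (fun i => by rw [A.E_pow, zero_smul]) hy
  have := Module.Finite.span_of_finite k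
    (Set.finite_range fun p : Σ _ : ι, Fin A.N => A.E ^ (p.2 : ℕ) • z p.1)
  exact Module.Finite.of_injective (Submodule.inclusion le) (Submodule.inclusion_injective le)

theorem finrank_span_singleton_le [Fintype ι] {κ l : ι → k}
    (hz : ∀ i, z i ∈ A.weightSpace (κ i) (l i)) (hF : ∀ i, A.F • z i ∈ A.raisingSpan z)
    {len : ι → ℕ} (hlen : ∀ i, A.E ^ len i • z i = 0) {y : M} (hy : y ∈ A.raisingSpan z) :
    Module.finrank k (Submodule.span R {y}) ≤ ∑ i, len i := by
  have := Module.Finite.span_of_finite k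
    (Set.finite_range fun p : Σ i, Fin (len i) => A.E ^ (p.2 : ℕ) • z p.1)
  calc Module.finrank k (Submodule.span R {y})
    _ ≤ _ := Submodule.finrank_mono (span_singleton_le_span_fin hz hF hlen hy)
    _ ≤ Fintype.card (Σ i, Fin (len i)) := finrank_range_le_card _
    _ = ∑ i, len i := by simp only [Fintype.card_sigma, Fintype.card_fin]

theorem finite (A : SmallQuantumSl2 k R) : Module.Finite k R := by
  let z : (Fin A.N × Fin A.N) × Fin A.N → R := fun p => A.F ^ (p.2 : ℕ) • A.weightIdem p.1.1 p.1.2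
  have weightIdem_mem (p : Fin A.N × Fin A.N) :
      A.weightIdem p.1 p.2 ∈ A.weightSpace (M := R) (A.q ^ (p.1 : ℕ)) (A.q ^ (p.2 : ℕ)) := by
    simpa only [smul_eq_mul, mul_one] using
      A.weightIdem_smul_mem_weightSpace p.1.2 p.2.2 (1 : R)
  have hF (p) : A.F • z p ∈ A.raisingSpan z := by
    obtain ⟨p, b⟩ := p
    dsimp only [z]
    rw [← mul_smul, ← pow_succ']
    rcases Nat.lt_or_ge (b + 1) A.N with hb | hb
    · exact mem_raisingSpan_self (z := z) (p, ⟨b + 1, hb⟩)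
    · rw [pow_eq_zero_of_le hb A.F_pow, zero_smul]
      exact Submodule.zero_mem _
  have one_mem : (1 : R) ∈ A.raisingSpan z := by
    rw [← A.sum_weightIdem]
    refine Submodule.sum_mem _ fun r hr => Submodule.sum_mem _ fun s hs => ?_
    rw [Finset.mem_range] at hr hs
    simpa only [z, pow_zero, one_smul] using
      mem_raisingSpan_self (A := A) (z := z) ((⟨r, hr⟩, ⟨s, hs⟩), ⟨0, by omega⟩)
  have := finite_span_singleton
    (fun p : (Fin A.N × Fin A.N) × Fin A.N =>
      F_pow_smul_mem_weightSpace (weightIdem_mem p.1) (p.2 : ℕ)) hF one_mem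
  have : Module.Finite k (⊤ : Submodule R R) := Ideal.span_singleton_one (α := R) ▸ this
  exact Module.Finite.equiv ((Submodule.topEquiv (R := R) (M := R)).restrictScalars k)

end RaisingSpan

section LowestWeight

variable {k R M : Type*} [Field k] [Ring R] [Algebra k R] [AddCommGroup M] [Module k M]
  [Module R M] {A : SmallQuantumSl2 k R}

theorem q_pow_ne_q_pow {i j : ℕ} (hi : 0 < i) (hij : i < j) (hj : j ≤ A.N) :
    A.q ^ i ≠ A.q ^ j := by
  obtain ⟨d, rfl⟩ := Nat.exists_eq_add_of_lt hij
  rw [add_assoc, pow_add]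
  exact fun h => A.q_pow_ne_one (by omega) (by omega)
    (mul_left_cancel₀ (pow_ne_zero i A.q_ne_zero) (h.symm.trans (mul_one _).symm))

variable [IsScalarTower k R M] {κ l : k} {w : M} {s : ℕ}

theorem F_smul_E_pow_succ_smul_of_F_smul_eq_zero (hw : w ∈ A.weightSpace κ l) (hF : A.F • w = 0)
    (m : ℕ) : A.F • A.E ^ (m + 1) • w = A.loweringCoeff l (m + 1) • A.E ^ m • w := by
  rw [F_smul_E_pow_succ_smul hw, hF, smul_zero, smul_zero, zero_add]

theorem F_smul_E_pow_smul_of_F_smul_eq_zero (hw : w ∈ A.weightSpace κ l) (hF : A.F • w = 0)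
    (r : ℕ) : A.F • A.E ^ r • w = A.loweringCoeff l r • A.E ^ (r - 1) • w := by
  cases r with
  | zero => simp [loweringCoeff, hF]
  | succ r => exact F_smul_E_pow_succ_smul_of_F_smul_eq_zero hw hF r

theorem F_smul_E_pow_smul_eq_zero (hw : w ∈ A.weightSpace κ l) (hF : A.F • w = 0)
    (hl : l * A.q = A.q ^ s) : A.F • A.E ^ s • w = 0 := by
  rw [F_smul_E_pow_smul_of_F_smul_eq_zero hw hF, loweringCoeff_eq_zero hl, zero_smul]

theorem isLoweringChain_E_pow_smul (hw : w ∈ A.weightSpace κ l) (hF : A.F • w = 0)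
    (hl : l * A.q = A.q ^ s) (hs : s ≤ A.N) :
    IsLoweringChain k A.F (fun j => A.E ^ j • w) s := by
  refine .of_step (by simpa only [pow_zero, one_smul] using hF) fun j hj =>
    ⟨A.loweringCoeff l (j + 1), loweringCoeff_ne_zero (A.q_pow_ne_one j.succ_pos (by omega))
      (hl ▸ q_pow_ne_q_pow j.succ_pos hj hs), ?_⟩
  rw [pow_succ A.F, mul_smul, F_smul_E_pow_succ_smul_of_F_smul_eq_zero hw hF, smul_comm]

theorem span_lowestWeight_le (hw : w ∈ A.weightSpace κ l) (hF : A.F • w = 0)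
    (hE : A.E ^ s • w = 0) : (Submodule.span R {w}).restrictScalars k ≤
      Submodule.span k (Set.range fun p : Σ _ : Unit, Fin s => A.E ^ (p.2 : ℕ) • w) :=
  span_singleton_le_span_fin (z := fun _ : Unit => w) (fun _ => hw)
    (fun _ => hF ▸ Submodule.zero_mem _) (fun _ => hE) (mem_raisingSpan_self ())

theorem isSimpleModule_span_singleton (hw0 : w ≠ 0) (hw : w ∈ A.weightSpace κ l)
    (hF : A.F • w = 0) (hl : l * A.q = A.q ^ s) (hs : s ≤ A.N) (hE : A.E ^ s • w = 0) :
    IsSimpleModule R (Submodule.span R {w}) := by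
  rw [isSimpleModule_iff_isAtom, isAtom_iff_le_of_ge]
  refine ⟨by simpa using hw0, fun B hB hBw => ?_⟩
  obtain ⟨v, hvB, hv0⟩ := (Submodule.ne_bot_iff B).1 hB
  obtain ⟨g, hg⟩ := (Submodule.mem_span_range_iff_exists_fun k).1
    (span_lowestWeight_le hw hF hE (hBw hvB))
  have hg0 : g ≠ 0 := by rintro rfl; exact hv0 (by simpa using hg.symm)
  obtain ⟨J, h, hh, e⟩ := IsLoweringChain.exists_pow_smul_sum_eq
    (fun _ : Unit => isLoweringChain_E_pow_smul hw hF hl hs) hg0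
  obtain ⟨_, hh⟩ := Function.ne_iff.1 hh
  simp only [hg, pow_zero, one_smul, Finset.univ_unique, Finset.sum_singleton] at e
  rw [Submodule.span_singleton_le_iff_mem, ← inv_smul_smul₀ hh w, ← e]
  exact B.smul_of_tower_mem _ (B.smul_mem _ hvB)

theorem exists_lowestWeight (A : SmallQuantumSl2 k R) (M : Type*) [AddCommGroup M] [Module k M]
    [Module R M] [IsScalarTower k R M] [Nontrivial M] :
    ∃ (κ : k) (r : ℕ) (w : M), r < A.N ∧ w ≠ 0 ∧ w ∈ A.weightSpace κ (A.q ^ r) ∧ A.F • w = 0 := by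
  classical
  obtain ⟨m, hm⟩ := exists_ne (0 : M)
  obtain ⟨r, hr, s, hs, hv0⟩ := A.exists_weightIdem_smul_ne_zero hm
  have hv := A.weightIdem_smul_mem_weightSpace hr hs m
  generalize A.weightIdem r s • m = v at hv0 hv
  have killed : ∃ j, A.F ^ j • v = 0 := ⟨A.N, by rw [A.F_pow, zero_smul]⟩
  obtain ⟨j, hj⟩ : ∃ j, Nat.find killed = j + 1 :=
    Nat.exists_eq_succ_of_ne_zero fun h => hv0 <| by
      simpa only [h, pow_zero, one_smul] using Nat.find_spec killed
  have hw0 := Nat.find_min killed (m := j) (by omega)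
  have hw := F_pow_smul_mem_weightSpace hv j
  obtain ⟨-, t, ht, hl⟩ := exists_eq_pow_of_mem_weightSpace hw hw0
  refine ⟨_, t, A.F ^ j • v, ht, hw0, hl ▸ hw, ?_⟩
  rw [← mul_smul, ← pow_succ', ← hj]
  exact Nat.find_spec killed

/-- Otherwise `E ^ s • w` would be a lowest weight vector generating `M`, so `E` would be
surjective on `M`; but `E` is nilpotent. -/
theorem E_pow_smul_eq_zero_of_isSimpleModule [IsSimpleModule R M] (hw0 : w ≠ 0)
    (hw : w ∈ A.weightSpace κ l) (hF : A.F • w = 0) (hs : 0 < s) (hl : l * A.q = A.q ^ s) :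
    A.E ^ s • w = 0 := by
  by_contra hu
  have raisingSpan_le : A.raisingSpan (fun _ : Unit => A.E ^ s • w) ≤
      LinearMap.range (Algebra.lsmul k k M A.E) := by
    refine Submodule.span_le.2 ?_
    rintro _ ⟨⟨_, j⟩, rfl⟩
    obtain ⟨s, rfl⟩ := Nat.exists_eq_add_of_lt hs
    refine ⟨A.E ^ (j + s) • w, ?_⟩
    simp only [Algebra.lsmul_coe, ← mul_smul, ← pow_succ', ← pow_add]
    congr 2
    omega
  have surjective (v : M) : ∃ v', A.E • v' = v := by
    have hv : v ∈ Submodule.span R {A.E ^ s • w} := by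
      rw [IsSimpleModule.span_singleton_eq_top R hu]
      exact Submodule.mem_top
    obtain ⟨r, rfl⟩ := Submodule.mem_span_singleton.1 hv
    exact raisingSpan_le <| smul_mem_raisingSpan (fun _ => E_pow_smul_mem_weightSpace hw s)
      (fun _ => F_smul_E_pow_smul_eq_zero hw hF hl ▸ Submodule.zero_mem _) r
      (mem_raisingSpan_self ())
  have surjective_pow (m : ℕ) : ∃ v : M, A.E ^ m • v = w := by
    induction m with
    | zero => exact ⟨w, by rw [pow_zero, one_smul]⟩
    | succ m ih =>
      obtain ⟨v, hv⟩ := ih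
      obtain ⟨v', rfl⟩ := surjective v
      exact ⟨v', by rw [pow_succ, mul_smul, hv]⟩
  obtain ⟨v, hv⟩ := surjective_pow A.N
  exact hw0 (by rw [← hv, A.E_pow, zero_smul])

theorem exists_basis_of_isSimpleModule (A : SmallQuantumSl2 k R) (M : Type*) [AddCommGroup M]
    [Module k M] [Module R M] [IsScalarTower k R M] [IsSimpleModule R M] :
    ∃ (κ : k) (a : ℕ) (w : M), a < A.N ∧ w ∈ A.weightSpace κ (A.q ^ a) ∧ A.F • w = 0 ∧
      A.E ^ (a + 1) • w = 0 ∧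
      ∃ B : Module.Basis (Fin (a + 1)) k M, ∀ i, B i = A.E ^ (i : ℕ) • w := by
  have := IsSimpleModule.nontrivial R M
  obtain ⟨κ, a, w, ha, hw0, hw, hF⟩ := A.exists_lowestWeight M
  have hE := E_pow_smul_eq_zero_of_isSimpleModule hw0 hw hF a.succ_pos (pow_succ ..).symm
  have linearIndependent := IsLoweringChain.linearIndependent
    (fun _ : Unit => isLoweringChain_E_pow_smul hw hF (pow_succ ..).symm ha)
    (by simpa only [pow_zero, one_smul, linearIndependent_unique_iff] using hw0)
  have span_le := span_lowestWeight_le hw hF hE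
  rw [IsSimpleModule.span_singleton_eq_top R hw0] at span_le
  refine ⟨κ, a, w, ha, hw, hF, hE, (Module.Basis.mk linearIndependent span_le).reindex
    (Equiv.uniqueSigma fun _ : Unit => Fin (a + 1)), fun i => ?_⟩
  rw [Module.Basis.reindex_apply]
  exact Module.Basis.mk_apply ..

end LowestWeight

section Lift

open Polynomial

variable {k R M : Type*} [Field k] [Ring R] [Algebra k R] [AddCommGroup M] [Module k M]
  [Module R M] {A : SmallQuantumSl2 k R}

variable (A) in
/-- The scalar by which `E * F` has to be shifted when it is moved past `F ^ j` to act on a vector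
of `G`-weight `l`: see `E_smul_F_pow_succ_smul`. -/
def efShift (l : k) (j : ℕ) : k :=
  A.q * (1 - A.q ^ j) * (1 - l * A.q * A.q ^ j) / ((1 - A.q) * A.q ^ j)

theorem efShift_succ (l : k) (j : ℕ) : A.q ^ (j + 1) * A.efShift l (j + 1) =
    A.q * (A.q ^ j * A.efShift l j) + A.q - A.q * ((A.q ^ 2) ^ (j + 1) * l) := by
  have := A.q_ne_zero
  have := A.one_sub_q_ne_zero
  simp only [efShift, ← pow_mul]
  field_simp
  ring

theorem efShift_eq_zero {l : k} {j m : ℕ} (hl : l * A.q = A.q ^ m) (hjm : j + m = A.N) :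
    A.efShift l j = 0 := by
  rw [efShift, hl, ← pow_add, add_comm m, hjm, A.isPrimitiveRoot.pow_eq_one, sub_self, mul_zero,
    zero_div]

theorem efShift_ne_zero {l : k} {j m : ℕ} (hl : l * A.q = A.q ^ m) (hj : 0 < j) (hjN : j < A.N)
    (hm : m < A.N) (hjm : j + m ≠ A.N) : A.efShift l j ≠ 0 := by
  refine div_ne_zero (mul_ne_zero (mul_ne_zero A.q_ne_zero
    (sub_ne_zero.2 (A.q_pow_ne_one hj hjN).symm)) (sub_ne_zero.2 fun h => hjm ?_))
    (mul_ne_zero A.one_sub_q_ne_zero (pow_ne_zero _ A.q_ne_zero))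
  rw [hl, ← pow_add, eq_comm, A.isPrimitiveRoot.pow_eq_one_iff_dvd] at h
  rw [add_comm, Nat.eq_of_dvd_of_lt_two_mul (by omega) h (by omega)]

variable (A) in
/-- The polynomial in `E * F` by which `E ^ c` and `F ^ (c + d)` partially cancel on vectors of
`G`-weight `l`: see `exists_E_pow_smul_F_pow_smul_eq`. -/
def efPoly (l : k) (d c : ℕ) : k[X] := ∏ r ∈ Finset.range c, (X - C (A.efShift l (d + r)))

theorem efPoly_add (l : k) (d c c' : ℕ) :
    A.efPoly l d (c + c') = A.efPoly l d c * A.efPoly l (d + c) c' := by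
  simp only [efPoly, Finset.prod_range_add, add_assoc]

theorem efPoly_one_of_efShift_eq_zero {l : k} {d : ℕ} (h : A.efShift l d = 0) :
    A.efPoly l d 1 = X := by
  rw [efPoly, Finset.prod_range_one, add_zero, h, C_0, sub_zero]

theorem eval_zero_efPoly_ne_zero {l : k} {d c : ℕ} (h : ∀ r < c, A.efShift l (d + r) ≠ 0) :
    (A.efPoly l d c).eval 0 ≠ 0 := by
  simp only [efPoly, eval_prod, eval_sub, eval_X, eval_C, zero_sub, Finset.prod_ne_zero_iff,
    Finset.mem_range, neg_ne_zero]
  exact h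

theorem isCoprime_X_of_eval_zero_ne_zero {f : k[X]} (hf : f.eval 0 ≠ 0) : IsCoprime X f := by
  refine (irreducible_X.coprime_iff_not_dvd).2 fun h => hf ?_
  rwa [X_dvd_iff, coeff_zero_eq_eval_zero] at h

variable [IsScalarTower k R M] {κ l : k} {v y : M}

theorem aeval_smul_mem_weightSpace (hv : v ∈ A.weightSpace κ l) (f : k[X]) :
    aeval (A.E * A.F) f • v ∈ A.weightSpace (M := M) κ l := by
  have EF_mem {u : M} (hu : u ∈ A.weightSpace κ l) : (A.E * A.F) • u ∈ A.weightSpace κ l := by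
    have := E_smul_mem_weightSpace (F_smul_mem_weightSpace hu)
    rwa [mul_inv_cancel_left₀ A.qb_ne_zero, inv_mul_cancel_left₀ (pow_ne_zero 2 A.q_ne_zero),
      ← mul_smul] at this
  induction f using Polynomial.induction_on generalizing v with
  | C c => rw [aeval_C, algebraMap_smul]; exact Submodule.smul_mem _ c hv
  | add f g hf hg => rw [map_add, add_smul]; exact Submodule.add_mem _ (hf hv) (hg hv)
  | monomial n c ih =>
    rw [pow_succ, ← mul_assoc, map_mul, mul_smul, aeval_X]
    exact ih (EF_mem hv)

theorem E_smul_F_pow_succ_smul (hv : v ∈ A.weightSpace κ l) (j : ℕ) : A.E • A.F ^ (j + 1) • v =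
    A.q ^ j • A.F ^ j • aeval (A.E * A.F) (X - C (A.efShift l j)) • v := by
  have E_smul_F_smul (u : M) : A.E • A.F • u = A.q • A.F • A.E • u - A.q • u + A.q • A.G • u := by
    rw [← mul_smul A.F, A.F_mul_E, sub_smul, add_smul, one_smul, smul_sub, smul_add, smul_assoc,
      smul_inv_smul₀ A.q_ne_zero, mul_smul]
    abel
  suffices key : A.E • A.F ^ (j + 1) • v =
      A.q ^ j • A.F ^ j • A.E • A.F • v - (A.q ^ j * A.efShift l j) • A.F ^ j • v by
    rw [key, map_sub, aeval_X, aeval_C, sub_smul, algebraMap_smul, smul_sub, smul_sub, mul_smul,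
      smul_comm (A.F ^ j) (A.efShift l j), mul_smul]
  induction j with
  | zero => simp [efShift]
  | succ j ih =>
    rw [pow_succ' A.F (j + 1), mul_smul, E_smul_F_smul, ih, (F_pow_smul_mem_weightSpace hv _).2,
      efShift_succ, smul_sub A.F, smul_comm A.F (A.q ^ j),
      smul_comm A.F (A.q ^ j * A.efShift l j), ← mul_smul A.F, ← mul_smul A.F, ← pow_succ']
    generalize A.F ^ (j + 1) • A.E • A.F • v = x
    generalize A.F ^ (j + 1) • v = x'
    module

theorem exists_E_pow_smul_F_pow_smul_eq (hv : v ∈ A.weightSpace κ l) (c d : ℕ) :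
    ∃ a : k, a ≠ 0 ∧ A.E ^ c • A.F ^ (c + d) • v =
      a • A.F ^ d • aeval (A.E * A.F) (A.efPoly l d c) • v := by
  induction c generalizing v with
  | zero => exact ⟨1, one_ne_zero, by simp [efPoly]⟩
  | succ c ih =>
    obtain ⟨a, ha, e⟩ := ih (aeval_smul_mem_weightSpace hv (X - C (A.efShift l (c + d))))
    refine ⟨A.q ^ (c + d) * a, mul_ne_zero (pow_ne_zero _ A.q_ne_zero) ha, ?_⟩
    rw [pow_succ, mul_smul, add_right_comm, E_smul_F_pow_succ_smul hv, smul_comm (A.E ^ c), e,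
      smul_smul (A.q ^ (c + d)), efPoly, efPoly, Finset.prod_range_succ, map_mul,
      mul_smul (aeval _ _), add_comm d]

theorem F_pow_smul_aeval_efPoly_smul_eq_zero (hv : v ∈ A.weightSpace κ l) {c d : ℕ}
    (hcd : A.N ≤ c + d) : A.F ^ d • aeval (A.E * A.F) (A.efPoly l d c) • v = 0 := by
  obtain ⟨a, ha, e⟩ := exists_E_pow_smul_F_pow_smul_eq hv c d
  rw [pow_eq_zero_of_le hcd A.F_pow, zero_smul, smul_zero, eq_comm] at e
  exact (smul_eq_zero.1 e).resolve_left ha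

theorem exists_mem_weightSpace_smul_eq (hy : y ∈ A.weightSpace κ l) :
    ∃ e ∈ A.weightSpace (M := R) κ l, e • y = y := by
  rcases eq_or_ne y 0 with rfl | hy0
  · exact ⟨0, Submodule.zero_mem _, smul_zero _⟩
  · obtain ⟨⟨r, hr, rfl⟩, s, hs, rfl⟩ := exists_eq_pow_of_mem_weightSpace hy hy0
    refine ⟨A.weightIdem r s, ?_, A.weightIdem_smul_of_mem_weightSpace hr hs hy⟩
    simpa only [smul_eq_mul, mul_one] using A.weightIdem_smul_mem_weightSpace hr hs (1 : R)

theorem exists_F_smul_eq_smul {p m : ℕ} {u : M} (hl : l * A.q = A.q ^ m) (hp : 0 < p)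
    (hm : 0 < m) (hpm : p + m = A.N) (hu : u ∈ A.weightSpace κ l)
    (hv : v = aeval (A.E * A.F) (A.efPoly l 1 (p - 1) * A.efPoly l (p + 1) (m - 1)) • u) :
    ∃ c : k, A.F • v = c • A.E ^ (p - 1) • A.F ^ p • v := by
  set P := A.efPoly l 1 (p - 1)
  set H := A.efPoly l (p + 1) (m - 1)
  have efPoly_eq : A.efPoly l 1 (A.N - 1) = P * (X * H) := by
    rw [show A.N - 1 = p - 1 + (1 + (m - 1)) by omega, efPoly_add, efPoly_add,
      Nat.add_sub_cancel' hp, efPoly_one_of_efShift_eq_zero (efShift_eq_zero hl hpm)]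
  have eval_ne_zero : P.eval 0 ≠ 0 := eval_zero_efPoly_ne_zero fun r hr =>
    efShift_ne_zero hl (by omega) (by omega) (by omega) (by omega)
  have X_part : A.F • aeval (A.E * A.F) (P.divX * X) • v = 0 := by
    have h := F_pow_smul_aeval_efPoly_smul_eq_zero
      (aeval_smul_mem_weightSpace hu P.divX) (c := A.N - 1) (d := 1) (by omega)
    rwa [efPoly_eq, pow_one, ← mul_smul (aeval _ _), ← map_mul,
      show P * (X * H) * P.divX = P.divX * X * (P * H) by ring, map_mul, mul_smul, ← hv] at h
  have F_smul_aeval : A.F • aeval (A.E * A.F) P • v = P.eval 0 • A.F • v := by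
    rw [← divX_mul_X_add P, map_add, add_smul, smul_add, X_part, zero_add, aeval_C, algebraMap_smul,
      smul_comm A.F, divX_mul_X_add, coeff_zero_eq_eval_zero]
  obtain ⟨a, ha, e⟩ := exists_E_pow_smul_F_pow_smul_eq
    (hv ▸ aeval_smul_mem_weightSpace hu _ : v ∈ A.weightSpace κ l) (p - 1) 1
  rw [Nat.sub_add_cancel hp, pow_one, F_smul_aeval, smul_smul a] at e
  exact ⟨(a * P.eval 0)⁻¹, by rw [e, inv_smul_smul₀ (mul_ne_zero ha eval_ne_zero)]⟩

/-- On the weight space of `y` the zeros of `efPoly l 1 (N - 1)` are the eigenvalues of `E * F`, and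
`0` is a simple one among them. Bézout for `X ^ 2` and the product of the other factors yields the
projection onto the generalized `0`-eigenspace; `v` is its value at a weight idempotent. -/
theorem exists_lift {p m : ℕ} (hl : l * A.q = A.q ^ m) (hp : 0 < p) (hm : 0 < m)
    (hpm : p + m = A.N) (hy : y ∈ A.weightSpace κ l) (hEF : A.E • A.F • A.E • A.F • y = 0) :
    ∃ v ∈ A.weightSpace (M := R) κ l, v • y = y ∧ A.F ^ (p + 1) • v = 0 ∧
      ∃ c : k, A.F • v = c • A.E ^ (p - 1) • A.F ^ p • v := by
  set P := A.efPoly l 1 (p - 1)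
  set H := A.efPoly l (p + 1) (m - 1)
  have eval_ne_zero : (P * H).eval 0 ≠ 0 := by
    rw [eval_mul]
    exact mul_ne_zero
      (eval_zero_efPoly_ne_zero fun r hr =>
        efShift_ne_zero hl (by omega) (by omega) (by omega) (by omega))
      (eval_zero_efPoly_ne_zero fun r hr =>
        efShift_ne_zero hl (by omega) (by omega) (by omega) (by omega))
  obtain ⟨a, b, hab⟩ := (isCoprime_X_of_eval_zero_ne_zero eval_ne_zero).pow_left (m := 2)
  obtain ⟨e, he, hey⟩ := exists_mem_weightSpace_smul_eq hy
  have hbe := aeval_smul_mem_weightSpace he b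
  refine ⟨_, aeval_smul_mem_weightSpace hbe (P * H), ?_, ?_,
    exists_F_smul_eq_smul hl hp hm hpm hbe rfl⟩
  · have hX : aeval (A.E * A.F) (a * X ^ 2) • y = 0 := by
      rw [map_mul, mul_smul, map_pow, aeval_X, sq, mul_smul, mul_smul, mul_smul, hEF, smul_zero]
    rw [smul_assoc, smul_assoc, hey, ← mul_smul, ← map_mul, mul_comm, ← sub_eq_of_eq_add' hab.symm,
      map_sub, map_one, sub_smul, one_smul, hX, sub_zero]
  · rw [mul_comm P, map_mul, mul_smul]
    exact F_pow_smul_aeval_efPoly_smul_eq_zero (aeval_smul_mem_weightSpace hbe P) (by omega)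

theorem finrank_span_singleton_le_two_mul {p : ℕ} {c : k} (hv : v ∈ A.weightSpace κ l)
    (hF : A.F ^ (p + 1) • v = 0) (hc : A.F • v = c • A.E ^ (p - 1) • A.F ^ p • v) :
    Module.Finite k (Submodule.span R {v}) ∧
      Module.finrank k (Submodule.span R {v}) ≤ 2 * A.N := by
  set z : Fin 2 → M := ![v, A.F ^ p • v]
  have hz : ∀ i, z i ∈ A.weightSpace (![κ, A.qb⁻¹ ^ p * κ] i) (![l, (A.q ^ 2) ^ p * l] i) :=
    Fin.forall_fin_two.2 ⟨hv, F_pow_smul_mem_weightSpace hv p⟩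
  have hFz : ∀ i, A.F • z i ∈ A.raisingSpan z := by
    refine Fin.forall_fin_two.2 ⟨?_, ?_⟩
    · exact hc ▸ Submodule.smul_mem _ c (E_pow_smul_mem_raisingSpan (z := z) 1 (p - 1))
    · have hF' : A.F • A.F ^ p • v = 0 := by rwa [← mul_smul, ← pow_succ']
      exact hF' ▸ Submodule.zero_mem _
  have v_mem := mem_raisingSpan_self (A := A) (z := z) 0
  have le := finrank_span_singleton_le hz hFz (len := fun _ => A.N)
    (fun i => by rw [A.E_pow, zero_smul]) v_mem
  rw [Fin.sum_const, smul_eq_mul] at le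
  exact ⟨finite_span_singleton hz hFz v_mem, le⟩

end Lift

end SmallQuantumSl2

theorem projective_span_singleton_of_isIdempotentElem {R : Type*} [Ring R] {v : R}
    (hv : IsIdempotentElem v) : Module.Projective R (Submodule.span R {v}) := by
  refine .of_split (Submodule.subtype _)
    ((LinearMap.toSpanSingleton R R v).codRestrict _ fun r =>
      Submodule.smul_mem _ r (Submodule.mem_span_singleton_self v)) ?_
  ext ⟨x, hx⟩
  obtain ⟨r, rfl⟩ := Submodule.mem_span_singleton.1 hx
  exact (mul_assoc r v v).trans (congrArg (r * ·) hv.eq)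

namespace SmallQuantumSl2

/-- The configuration found in the socle and the generator of a nonsimple indecomposable projective
module: `w` is a lowest weight vector for which `F` kills `E ^ p • w` again, and `F • y` is the last
vector `E ^ (p - 1) • w` in front of that gap. -/
structure IsProjectiveConfiguration {k R M : Type*} [Field k] [Ring R] [Algebra k R]
    [AddCommGroup M] [Module k M] [Module R M] [IsScalarTower k R M] (A : SmallQuantumSl2 k R)
    (κ l : k) (p : ℕ) (w y : M) : Prop where
  pos : 0 < p
  lt : p < A.N
  mul_q : l * A.q = A.q ^ p
  mem_bottom : w ∈ A.weightSpace κ l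
  mem_generator : y ∈ A.weightSpace (A.qb ^ p * κ) ((A.q ^ 2)⁻¹ ^ p * l)
  F_smul_bottom : A.F • w = 0
  F_smul_generator : A.F • y = A.E ^ (p - 1) • w

/-- The chain through `y` down to `w`. -/
def socleChain {k R M : Type*} [Field k] [Ring R] [Algebra k R] [AddCommGroup M] [Module R M]
    (A : SmallQuantumSl2 k R) (p : ℕ) (w y : M) (j : ℕ) : M :=
  if j < p then A.E ^ j • w else A.E ^ (j - p) • y

/-- The chain through `E ^ (N - p) • y` down to `E ^ p • w`. -/
def gapChain {k R M : Type*} [Field k] [Ring R] [Algebra k R] [AddCommGroup M] [Module R M]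
    (A : SmallQuantumSl2 k R) (p : ℕ) (w y : M) (j : ℕ) : M :=
  if j < A.N - p then A.E ^ j • A.E ^ p • w else A.E ^ (A.N - p + (j - (A.N - p))) • y

namespace IsProjectiveConfiguration

variable {k R M : Type*} [Field k] [Ring R] [Algebra k R] [AddCommGroup M] [Module k M]
  [Module R M] [IsScalarTower k R M] {A : SmallQuantumSl2 k R} {κ l : k} {p : ℕ} {w y : M}

theorem mul_q_gap (h : A.IsProjectiveConfiguration κ l p w y) :
    (A.q ^ 2)⁻¹ ^ p * l * A.q = A.q ^ (A.N - p) := by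
  have := h.lt
  rw [mul_assoc, h.mul_q, inv_pow, ← pow_mul, inv_mul_eq_iff_eq_mul₀ (pow_ne_zero _ A.q_ne_zero),
    ← pow_add, show 2 * p + (A.N - p) = p + A.N by omega, pow_add, A.isPrimitiveRoot.pow_eq_one,
    mul_one]

theorem F_smul_gap (h : A.IsProjectiveConfiguration κ l p w y) : A.F • A.E ^ p • w = 0 :=
  F_smul_E_pow_smul_eq_zero h.mem_bottom h.F_smul_bottom h.mul_q

theorem isLoweringChain_gap (h : A.IsProjectiveConfiguration κ l p w y) :
    IsLoweringChain k A.F (fun j => A.E ^ j • A.E ^ p • w) (A.N - p) :=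
  isLoweringChain_E_pow_smul (E_pow_smul_mem_weightSpace h.mem_bottom p) h.F_smul_gap h.mul_q_gap
    (A.N.sub_le p)

theorem F_smul_E_pow_succ_smul_generator (h : A.IsProjectiveConfiguration κ l p w y) (j : ℕ) :
    A.F • A.E ^ (j + 1) • y = A.q⁻¹ ^ (j + 1) • A.E ^ j • A.E ^ p • w +
      A.loweringCoeff ((A.q ^ 2)⁻¹ ^ p * l) (j + 1) • A.E ^ j • y := by
  have := h.pos
  rw [F_smul_E_pow_succ_smul h.mem_generator, h.F_smul_generator, ← mul_smul (A.E ^ (j + 1)),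
    ← pow_add, ← mul_smul (A.E ^ j), ← pow_add, show j + 1 + (p - 1) = j + p by omega]

theorem loweringCoeff_gap_ne_zero (h : A.IsProjectiveConfiguration κ l p w y) {m : ℕ} (hm : 0 < m)
    (hmN : m < A.N) (hmp : m ≠ A.N - p) :
    A.loweringCoeff ((A.q ^ 2)⁻¹ ^ p * l) m ≠ 0 := by
  have := h.pos
  refine loweringCoeff_ne_zero (A.q_pow_ne_one hm hmN) ?_
  rw [h.mul_q_gap]
  exact fun e => hmp (A.q_pow_inj hmN (by omega) e)

theorem isLoweringChain_socleChain (h : A.IsProjectiveConfiguration κ l p w y) :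
    IsLoweringChain k A.F (A.socleChain p w y) A.N := by
  have := h.lt
  rw [← Nat.add_sub_cancel' h.lt.le]
  refine (isLoweringChain_E_pow_smul h.mem_bottom h.F_smul_bottom h.mul_q h.lt.le).append h.pos
    (y := fun j => A.E ^ j • y) (one_ne_zero (α := k)) ?_ fun j hj =>
    ⟨A.loweringCoeff ((A.q ^ 2)⁻¹ ^ p * l) (j + 1),
      h.loweringCoeff_gap_ne_zero j.succ_pos (by omega) (by omega), ?_⟩
  · rw [pow_zero, one_smul, one_smul, h.F_smul_generator]
  · rw [pow_succ A.F, mul_smul, h.F_smul_E_pow_succ_smul_generator, smul_add,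
      smul_comm (A.F ^ (p + j)) (A.q⁻¹ ^ (j + 1)),
      h.isLoweringChain_gap.pow_smul_eq_zero (by omega) (by have := h.pos; omega), smul_zero,
      zero_add, smul_comm]

theorem isLoweringChain_gapChain (h : A.IsProjectiveConfiguration κ l p w y) :
    IsLoweringChain k A.F (A.gapChain p w y) A.N := by
  have := h.lt
  have := h.pos
  have hc₀ : A.q⁻¹ ^ (A.N - p) ≠ 0 := pow_ne_zero _ (inv_ne_zero A.q_ne_zero)
  nth_rw 1 [← Nat.sub_add_cancel h.lt.le]
  refine h.isLoweringChain_gap.append (y := fun j => A.E ^ (A.N - p + j) • y) (by omega) hc₀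
    ?_ fun j hj => ⟨A.loweringCoeff ((A.q ^ 2)⁻¹ ^ p * l) (A.N - p + j + 1),
      h.loweringCoeff_gap_ne_zero (by omega) (by omega) (by omega), ?_⟩
  · obtain ⟨m, hm⟩ := Nat.exists_eq_succ_of_ne_zero (show A.N - p ≠ 0 by omega)
    rw [add_zero, hm, h.F_smul_E_pow_succ_smul_generator,
      loweringCoeff_eq_zero (h.mul_q_gap.trans (by rw [hm])), zero_smul, add_zero, Nat.succ_sub_one]
  · rw [pow_succ A.F, mul_smul, ← add_assoc, h.F_smul_E_pow_succ_smul_generator,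
      ← mul_smul (A.E ^ _), ← pow_add, A.E_pow_eq_zero (by omega), zero_smul, smul_zero, zero_add,
      smul_comm]

theorem bottom_mem_span_generator (h : A.IsProjectiveConfiguration κ l p w y) :
    w ∈ Submodule.span R {y} := by
  obtain ⟨c, hc, e⟩ := h.isLoweringChain_socleChain.exists_pow_smul_eq p h.lt
  simp only [socleChain, lt_irrefl, if_false, h.pos, if_true, Nat.sub_self, pow_zero,
    one_smul] at e
  rw [← inv_smul_smul₀ hc w, ← e]
  exact Submodule.smul_of_tower_mem _ _
    (Submodule.smul_mem _ _ (Submodule.mem_span_singleton_self y))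

theorem socleChain_mem_span_generator (h : A.IsProjectiveConfiguration κ l p w y) (j : ℕ) :
    A.socleChain p w y j ∈ Submodule.span R {y} := by
  unfold socleChain
  split_ifs
  · exact Submodule.smul_mem _ _ h.bottom_mem_span_generator
  · exact Submodule.smul_mem _ _ (Submodule.mem_span_singleton_self y)

theorem gapChain_mem_span_generator (h : A.IsProjectiveConfiguration κ l p w y) (j : ℕ) :
    A.gapChain p w y j ∈ Submodule.span R {y} := by
  unfold gapChain
  split_ifs
  · exact Submodule.smul_mem _ _ (Submodule.smul_mem _ _ h.bottom_mem_span_generator)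
  · exact Submodule.smul_mem _ _ (Submodule.mem_span_singleton_self y)

theorem exists_lift_generator (h : A.IsProjectiveConfiguration κ l p w y) :
    ∃ v : R, v • y = y ∧ Module.Finite k (Submodule.span R {v}) ∧
      Module.finrank k (Submodule.span R {v}) ≤ 2 * A.N := by
  have := h.lt
  have hEF : A.E • A.F • A.E • A.F • y = 0 := by
    rw [h.F_smul_generator, ← mul_smul A.E (A.E ^ _), ← pow_succ', Nat.sub_add_cancel h.pos,
      h.F_smul_gap, smul_zero]
  obtain ⟨v, hv, hvy, hF, c, hc⟩ := exists_lift h.mul_q_gap h.pos (by omega) (by omega)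
    h.mem_generator hEF
  exact ⟨v, hvy, finrank_span_singleton_le_two_mul hv hF hc⟩

end IsProjectiveConfiguration

end SmallQuantumSl2

section GridBasis

variable {k M : Type*} [Field k] [AddCommGroup M] [Module k M] {a b : ℕ}

/-- The vectors of a basis indexed by an `a × b` grid, extended by `0` to `ℕ × ℕ`. -/
def gridVec (B : Module.Basis (Fin a × Fin b) k M) (r s : ℕ) : M :=
  if h : r < a ∧ s < b then B (⟨r, h.1⟩, ⟨s, h.2⟩) else 0

/-- The coordinates with respect to a basis indexed by an `a × b` grid, extended by `0` to
`ℕ × ℕ`. -/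
def gridCoord (B : Module.Basis (Fin a × Fin b) k M) (r s : ℕ) : M →ₗ[k] k :=
  if h : r < a ∧ s < b then B.coord (⟨r, h.1⟩, ⟨s, h.2⟩) else 0

/-- The span of the vectors of a grid basis whose two indices add up to `l`. -/
def gridLevel (B : Module.Basis (Fin a × Fin b) k M) (l : ℕ) : Submodule k M :=
  Submodule.span k {v | ∃ r s, r + s = l ∧ v = gridVec B r s}

variable {B : Module.Basis (Fin a × Fin b) k M}

theorem gridVec_coe (i : Fin a × Fin b) : gridVec B i.1 i.2 = B i :=
  dif_pos ⟨i.1.2, i.2.2⟩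

theorem gridCoord_coe (i : Fin a × Fin b) : gridCoord B i.1 i.2 = B.coord i :=
  dif_pos ⟨i.1.2, i.2.2⟩

theorem gridCoord_eq_zero {r s : ℕ} (h : ¬ (r < a ∧ s < b)) : gridCoord B r s = 0 :=
  dif_neg h

theorem gridCoord_gridVec (r s r' s' : ℕ) :
    gridCoord B r s (gridVec B r' s') = if r' = r ∧ s' = s ∧ r < a ∧ s < b then 1 else 0 := by
  unfold gridCoord gridVec
  split_ifs with h h' h'' h'' <;> simp [Finsupp.single_apply] <;> omega

theorem gridVec_mem_gridLevel (r s : ℕ) : gridVec B r s ∈ gridLevel B (r + s) :=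
  Submodule.subset_span ⟨r, s, rfl, rfl⟩

theorem gridCoord_eq_zero_of_mem_gridLevel {l r s : ℕ} {v : M} (hv : v ∈ gridLevel B l)
    (hl : r + s ≠ l) : gridCoord B r s v = 0 := by
  induction hv using Submodule.span_induction with
  | mem v hv =>
    obtain ⟨r', s', h, rfl⟩ := hv
    rw [gridCoord_gridVec, if_neg (by omega)]
  | zero => exact map_zero _
  | add v w _ _ hv hw => rw [map_add, hv, hw, add_zero]
  | smul c v _ hv => rw [map_smul, hv, smul_zero]

theorem eq_zero_of_mem_gridLevel {l : ℕ} {v : M} (hv : v ∈ gridLevel B l)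
    (h : ∀ r < a, ∀ s < b, r + s = l → gridCoord B r s v = 0) : v = 0 := by
  refine B.ext_elem fun i => ?_
  rw [map_zero, Finsupp.zero_apply, ← B.coord_apply, ← gridCoord_coe]
  by_cases hi : (i.1 + i.2 : ℕ) = l
  · exact h _ i.1.2 _ i.2.2 hi
  · exact gridCoord_eq_zero_of_mem_gridLevel hv hi

theorem linearIndependent_of_mem_gridLevel {ι : Type*} [Finite ι] {x : ι → M} {l : ι → ℕ}
    (hl : Function.Injective l) (hx : ∀ i, x i ∈ gridLevel B (l i)) (h0 : ∀ i, x i ≠ 0) :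
    LinearIndependent k x := by
  cases nonempty_fintype ι
  refine Fintype.linearIndependent_iff.2 fun c hc i => ?_
  by_contra hci
  refine h0 i (eq_zero_of_mem_gridLevel (hx i) fun r _ s _ h => ?_)
  have := congrArg (gridCoord B r s) hc
  rw [map_sum, map_zero, Finset.sum_eq_single i _ (by simp), map_smul] at this
  · exact (smul_eq_zero.1 this).resolve_left hci
  · intro j _ hj
    rw [map_smul, gridCoord_eq_zero_of_mem_gridLevel (hx j) fun e => hj (hl (e.symm.trans h)),
      smul_zero]

end GridBasis

namespace SmallQuantumSl2

/-- A module with a basis of weight vectors in an `a × b` grid on which `E` and `F` act like on the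
tensor product of two simple modules of dimensions `a` and `b`. -/
structure GridModule {k R : Type*} [Field k] [Ring R] [Algebra k R] (A : SmallQuantumSl2 k R)
    (M : Type*) [AddCommGroup M] [Module k M] [Module R M] [IsScalarTower k R M] (a b : ℕ) where
  basis : Module.Basis (Fin a × Fin b) k M
  (κ : k) (α β α' β' : ℕ → ℕ → k)
  mem_weightSpace : ∀ r < a, ∀ s < b, gridVec basis r s ∈
    A.weightSpace (A.qb ^ (r + s) * κ) ((A.q ^ 2)⁻¹ ^ (r + s) * A.q ^ (a + b - 2))
  F_smul : ∀ r < a, ∀ s < b, A.F • gridVec basis r s =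
    α r s • gridVec basis (r - 1) s + β r s • gridVec basis r (s - 1)
  E_smul : ∀ r < a, ∀ s < b, A.E • gridVec basis r s =
    α' r s • gridVec basis (r + 1) s + β' r s • gridVec basis r (s + 1)
  α_eq_zero_iff : ∀ r < a, ∀ s < b, α r s = 0 ↔ r = 0
  β_eq_zero_iff : ∀ r < a, ∀ s < b, β r s = 0 ↔ s = 0
  β'_ne_zero : ∀ r < a, ∀ s < b, β' r s ≠ 0

namespace GridModule

variable {k R M : Type*} [Field k] [Ring R] [Algebra k R] [AddCommGroup M] [Module k M]
  [Module R M] [IsScalarTower k R M] {A : SmallQuantumSl2 k R} {a b : ℕ}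

theorem gridCoord_F_smul (g : A.GridModule M a b) {r s : ℕ} (hr : r < a) (hs : s < b) (v : M) :
    gridCoord g.basis r s (A.F • v) = g.α (r + 1) s * gridCoord g.basis (r + 1) s v +
      g.β r (s + 1) * gridCoord g.basis r (s + 1) v := by
  suffices gridCoord g.basis r s ∘ₗ Algebra.lsmul k k M A.F =
      g.α (r + 1) s • gridCoord g.basis (r + 1) s + g.β r (s + 1) • gridCoord g.basis r (s + 1) from
    LinearMap.congr_fun this v
  refine g.basis.ext fun i => ?_
  have hα := g.α_eq_zero_iff i.1 i.1.2 i.2 i.2.2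
  have hβ := g.β_eq_zero_iff i.1 i.1.2 i.2 i.2.2
  have hi := i.1.2
  have hj := i.2.2
  rw [← gridVec_coe]
  simp only [LinearMap.comp_apply, Algebra.lsmul_coe, LinearMap.add_apply, LinearMap.smul_apply,
    smul_eq_mul, g.F_smul _ hi _ hj, map_add, map_smul, gridCoord_gridVec]
  grind

theorem gridCoord_E_smul (g : A.GridModule M a b) {r s : ℕ} (hr : r < a) (hs : s + 1 < b) (v : M) :
    gridCoord g.basis r (s + 1) (A.E • v) =
      (if r = 0 then 0 else g.α' (r - 1) (s + 1) * gridCoord g.basis (r - 1) (s + 1) v) +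
        g.β' r s * gridCoord g.basis r s v := by
  suffices gridCoord g.basis r (s + 1) ∘ₗ Algebra.lsmul k k M A.E =
      (if r = 0 then 0 else g.α' (r - 1) (s + 1) • gridCoord g.basis (r - 1) (s + 1)) +
        g.β' r s • gridCoord g.basis r s by
    have := LinearMap.congr_fun this v
    split_ifs at this ⊢ <;> exact this
  refine g.basis.ext fun i => ?_
  have hi := i.1.2
  have hj := i.2.2
  rw [← gridVec_coe]
  split_ifs <;>
  simp only [LinearMap.comp_apply, Algebra.lsmul_coe, LinearMap.add_apply, LinearMap.smul_apply,
    smul_eq_mul, g.E_smul _ hi _ hj, map_add, map_smul, gridCoord_gridVec, LinearMap.zero_apply] <;>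
  grind

theorem gridLevel_le_weightSpace (g : A.GridModule M a b) (l : ℕ) :
    gridLevel g.basis l ≤
      A.weightSpace (A.qb ^ l * g.κ) ((A.q ^ 2)⁻¹ ^ l * A.q ^ (a + b - 2)) := by
  refine Submodule.span_le.2 ?_
  rintro _ ⟨r, s, rfl, rfl⟩
  by_cases h : r < a ∧ s < b
  · exact g.mem_weightSpace r h.1 s h.2
  · rw [gridVec, dif_neg h]
    exact zero_mem _

theorem E_smul_mem_gridLevel (g : A.GridModule M a b) {l : ℕ} {v : M}
    (hv : v ∈ gridLevel g.basis l) : A.E • v ∈ gridLevel g.basis (l + 1) := by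
  induction hv using Submodule.span_induction with
  | mem v hv =>
    obtain ⟨r, s, rfl, rfl⟩ := hv
    by_cases h : r < a ∧ s < b
    · rw [g.E_smul r h.1 s h.2]
      refine add_mem (Submodule.smul_mem _ _ ?_) (Submodule.smul_mem _ _ ?_)
      · exact add_right_comm r s 1 ▸ gridVec_mem_gridLevel (r + 1) s
      · exact gridVec_mem_gridLevel r (s + 1)
    · rw [gridVec, dif_neg h, smul_zero]
      exact zero_mem _
  | zero => exact (smul_zero (A := M) A.E).symm ▸ zero_mem _
  | add v w _ _ hv hw => exact smul_add A.E v w ▸ add_mem hv hw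
  | smul c v _ hv => exact smul_comm c A.E v ▸ Submodule.smul_mem _ c hv

theorem E_pow_smul_mem_gridLevel (g : A.GridModule M a b) {l : ℕ} {v : M}
    (hv : v ∈ gridLevel g.basis l) (j : ℕ) : A.E ^ j • v ∈ gridLevel g.basis (l + j) := by
  induction j with
  | zero => rwa [pow_zero, one_smul]
  | succ j ih => exact pow_succ' A.E j ▸ mul_smul A.E _ v ▸ g.E_smul_mem_gridLevel ih

theorem eq_zero_of_F_smul_eq_zero (g : A.GridModule M a b) {l : ℕ} (hl : b ≤ l) {v : M}
    (hv : v ∈ gridLevel g.basis l) (h : A.F • v = 0) : v = 0 := by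
  refine eq_zero_of_mem_gridLevel hv fun r => ?_
  induction r with
  | zero => intro _ s hs _; omega
  | succ r ih =>
    intro hr s hs hrs
    have next_eq_zero : gridCoord g.basis r (s + 1) v = 0 := by
      by_cases hs' : s + 1 < b
      · exact ih (by omega) _ hs' (by omega)
      · rw [gridCoord_eq_zero (by omega), LinearMap.zero_apply]
    have := g.gridCoord_F_smul (Nat.lt_of_succ_lt hr) hs v
    rw [h, map_zero, next_eq_zero, mul_zero, add_zero] at this
    exact (mul_eq_zero.1 this.symm).resolve_left
      ((g.α_eq_zero_iff _ hr _ hs).not.2 r.succ_ne_zero)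

theorem eq_zero_of_E_smul_eq_zero (g : A.GridModule M a b) {l : ℕ} (hl : l + 1 < b) {v : M}
    (hv : v ∈ gridLevel g.basis l) (h : A.E • v = 0) : v = 0 := by
  refine eq_zero_of_mem_gridLevel hv fun r => ?_
  induction r with
  | zero =>
    intro hr s hs hrs
    have := g.gridCoord_E_smul hr (by omega : s + 1 < b) v
    rw [h, map_zero, if_pos rfl, zero_add] at this
    exact (mul_eq_zero.1 this.symm).resolve_left (g.β'_ne_zero _ hr _ hs)
  | succ r ih =>
    intro hr s hs hrs
    have := g.gridCoord_E_smul hr (by omega : s + 1 < b) v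
    rw [h, map_zero, if_neg r.succ_ne_zero, Nat.succ_sub_one,
      ih (by omega) _ (by omega) (by omega), mul_zero, zero_add] at this
    exact (mul_eq_zero.1 this.symm).resolve_left (g.β'_ne_zero _ hr _ hs)

theorem E_pow_smul_ne_zero (g : A.GridModule M a b) {l j : ℕ} (hl : l + j < b) {v : M}
    (hv : v ∈ gridLevel g.basis l) (h0 : v ≠ 0) : A.E ^ j • v ≠ 0 := by
  induction j with
  | zero => rwa [pow_zero, one_smul]
  | succ j ih =>
    rw [pow_succ', mul_smul]
    exact fun h => ih (by omega)
      (g.eq_zero_of_E_smul_eq_zero (by omega) (g.E_pow_smul_mem_gridLevel hv j) h)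

/-- Along a level the equation `F • v = u` is triangular with the coefficients `β` on the diagonal,
and the first coordinate of `v` is free. -/
theorem exists_gridCoord_F_smul_eq (g : A.GridModule M a b) {l : ℕ} (hl : l + 1 < b) (u : M)
    (c : k) (m : ℕ) :
    ∃ v ∈ gridLevel g.basis (l + 1), (l + 1 < a → gridCoord g.basis (l + 1) 0 v = c) ∧
      ∀ r < a, ∀ s < m, r + s = l →
        gridCoord g.basis r s (A.F • v) = gridCoord g.basis r s u := by
  induction m with
  | zero =>
    refine ⟨c • gridVec g.basis (l + 1) 0, Submodule.smul_mem _ _ (gridVec_mem_gridLevel _ 0),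
      fun hla => ?_, fun _ _ s hs => absurd hs s.not_lt_zero⟩
    rw [map_smul, gridCoord_gridVec, if_pos ⟨rfl, rfl, hla, by omega⟩, smul_eq_mul, mul_one]
  | succ m ih =>
    obtain ⟨v, hv, hc, hF⟩ := ih
    by_cases hm : m ≤ l ∧ l - m < a
    · have hβ := (g.β_eq_zero_iff (l - m) hm.2 (m + 1) (by omega)).not.2 m.succ_ne_zero
      set d := (g.β (l - m) (m + 1))⁻¹ *
        (gridCoord g.basis (l - m) m u - gridCoord g.basis (l - m) m (A.F • v)) with hd
      refine ⟨v + d • gridVec g.basis (l - m) (m + 1), add_mem hv (Submodule.smul_mem _ _ ?_),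
        fun hla => ?_, fun r hr s hs hrs => ?_⟩
      · exact (by omega : l - m + (m + 1) = l + 1) ▸ gridVec_mem_gridLevel _ _
      · rw [map_add, map_smul, gridCoord_gridVec, if_neg (by omega), smul_zero, add_zero, hc hla]
      rw [smul_add, map_add, smul_comm A.F d, (gridCoord _ r s).map_smul,
        g.gridCoord_F_smul hr (by omega) (gridVec _ _ _), gridCoord_gridVec,
        gridCoord_gridVec, if_neg (by omega), mul_zero, zero_add]
      rcases Nat.lt_succ_iff_lt_or_eq.1 hs with hs | rfl
      · rw [hF r hr s hs hrs, if_neg (by omega), mul_zero, smul_zero, add_zero]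
      · obtain rfl : r = l - s := by omega
        rw [if_pos ⟨rfl, rfl, hm.2, by omega⟩, mul_one, smul_eq_mul, hd, mul_right_comm,
          inv_mul_cancel₀ hβ, one_mul, add_sub_cancel]
    · exact ⟨v, hv, hc, fun r hr s hs hrs => hF r hr s (by omega) hrs⟩

theorem exists_F_smul_eq (g : A.GridModule M a b) {l : ℕ} (hl : l + 1 < b) {u : M}
    (hu : u ∈ gridLevel g.basis l) (c : k) :
    ∃ v ∈ gridLevel g.basis (l + 1), (l + 1 < a → gridCoord g.basis (l + 1) 0 v = c) ∧
      A.F • v = u := by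
  obtain ⟨v, hv, hc, hF⟩ := g.exists_gridCoord_F_smul_eq hl u c (l + 1)
  refine ⟨v, hv, hc, g.basis.ext_elem fun i => ?_⟩
  rw [← g.basis.coord_apply, ← g.basis.coord_apply, ← gridCoord_coe]
  by_cases hi : (i.1 + i.2 : ℕ) = l
  · exact hF _ i.1.2 _ (by omega) hi
  · rw [gridCoord_eq_zero_of_mem_gridLevel hu hi, g.gridCoord_F_smul i.1.2 i.2.2,
      gridCoord_eq_zero_of_mem_gridLevel hv (by omega),
      gridCoord_eq_zero_of_mem_gridLevel hv (by omega), mul_zero, mul_zero, add_zero]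

theorem exists_lowestVector (g : A.GridModule M a b) {l : ℕ} (hla : l < a) (hlb : l < b) :
    ∃ w ∈ gridLevel g.basis l, w ≠ 0 ∧ A.F • w = 0 := by
  cases l with
  | zero =>
    refine ⟨_, gridVec_mem_gridLevel 0 0, fun h => ?_, ?_⟩
    · simpa [gridCoord_gridVec, hla, hlb] using congrArg (gridCoord g.basis 0 0) h
    · rw [g.F_smul 0 hla 0 hlb, (g.α_eq_zero_iff 0 hla 0 hlb).2 rfl,
        (g.β_eq_zero_iff 0 hla 0 hlb).2 rfl, zero_smul, zero_add]
  | succ l =>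
    obtain ⟨w, hw, hc, hF⟩ := g.exists_F_smul_eq hlb (zero_mem (gridLevel g.basis l)) 1
    refine ⟨w, hw, ?_, hF⟩
    rintro rfl
    exact zero_ne_one ((map_zero _).symm.trans (hc hla))

end GridModule

end SmallQuantumSl2

section GeneratorMap

variable {R M ι τ : Type*} [Ring R] [AddCommGroup M] [Module R M] [Fintype ι] [Fintype τ]
  [DecidableEq ι] [DecidableEq τ] {w : ι → M} {y : τ → M} {v : τ → R}

/-- The map to `M` from the direct sum of the submodules generated by the `w i` and the left ideals
generated by the `v t`, under which `v t` goes to `v t • y t`. -/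
def generatorMap (w : ι → M) (y : τ → M) (v : τ → R) :
    ((∀ i, Submodule.span R {w i}) × ∀ t, Submodule.span R {v t}) →ₗ[R] M :=
  (LinearMap.lsum R _ ℕ fun _ => Submodule.subtype _).coprod
    (LinearMap.lsum R _ ℕ fun t => LinearMap.toSpanSingleton R M (y t) ∘ₗ Submodule.subtype _)

theorem generatorMap_single_left (i : ι) (x : Submodule.span R {w i}) :
    generatorMap w y v (Pi.single i x, 0) = x := by
  simp only [generatorMap, LinearMap.coprod_apply, map_zero, add_zero, LinearMap.lsum_piSingle,
    Submodule.subtype_apply]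

theorem generatorMap_single_right (t : τ) (x : Submodule.span R {v t}) :
    generatorMap w y v (0, Pi.single t x) = (x : R) • y t := by
  simp only [generatorMap, LinearMap.coprod_apply, map_zero, zero_add, LinearMap.lsum_piSingle,
    LinearMap.comp_apply, Submodule.subtype_apply, LinearMap.toSpanSingleton_apply]

theorem generatorMap_surjective (hvy : ∀ t, v t • y t = y t)
    (hspan : Submodule.span R (Set.range w ∪ Set.range y) = ⊤) :
    Function.Surjective (generatorMap w y v) := by
  rw [← LinearMap.range_eq_top, ← top_le_iff, ← hspan, Submodule.span_le]
  rintro _ (⟨i, rfl⟩ | ⟨t, rfl⟩)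
  · exact ⟨(Pi.single i ⟨w i, Submodule.mem_span_singleton_self _⟩, 0),
      generatorMap_single_left i _⟩
  · exact ⟨(0, Pi.single t ⟨v t, Submodule.mem_span_singleton_self _⟩),
      (generatorMap_single_right t _).trans (hvy t)⟩

theorem isIdempotentElem_of_generatorMap_injective (hvy : ∀ t, v t • y t = y t)
    (hinj : Function.Injective (generatorMap w y v)) (t : τ) : IsIdempotentElem (v t) := by
  have hv := Submodule.mem_span_singleton_self (R := R) (v t)
  have : Pi.single t ⟨v t * v t, Submodule.smul_mem _ (v t) hv⟩ =
      (Pi.single t ⟨v t, hv⟩ : ∀ t, Submodule.span R {v t}) := by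
    refine (Prod.mk.inj (hinj (a₁ := (0, _)) (a₂ := (0, _)) ?_)).2
    simp only [generatorMap_single_right, mul_smul, hvy]
  exact congrArg Subtype.val (Pi.single_injective t this)

variable {k : Type*} [Field k] [Algebra k R] [Module k M] [IsScalarTower k R M]
  [Module.Finite k M]

theorem generatorMap_bijective (hvy : ∀ t, v t • y t = y t)
    (hspan : Submodule.span R (Set.range w ∪ Set.range y) = ⊤)
    (hfin : ∀ t, Module.Finite k (Submodule.span R {v t}))
    (hrank : ∑ i, Module.finrank k (Submodule.span R {w i}) +
      ∑ t, Module.finrank k (Submodule.span R {v t}) ≤ Module.finrank k M) :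
    Function.Bijective (generatorMap w y v) := by
  have (i : ι) : Module.Finite k (Submodule.span R {w i}) :=
    .of_injective ((Submodule.subtype _).restrictScalars k) Subtype.val_injective
  have surjective := generatorMap_surjective hvy hspan
  refine ⟨?_, surjective⟩
  refine (LinearMap.injective_iff_surjective_of_finrank_eq_finrank
    (f := (generatorMap w y v).restrictScalars k) (le_antisymm ?_ ?_)).2 surjective
  · rwa [Module.finrank_prod, Module.finrank_pi_fintype, Module.finrank_pi_fintype]
  · exact LinearMap.finrank_le_finrank_of_surjective
      (f := (generatorMap w y v).restrictScalars k) surjective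

end GeneratorMap

theorem IsSemisimpleAddProjective.id_of_generators.{u} {k : Type*} {R M : Type u} {ι τ : Type}
    [Field k] [Ring R] [Algebra k R] [AddCommGroup M] [Module k M] [Module R M]
    [IsScalarTower k R M] [Module.Finite k M] [Fintype ι] [Fintype τ] {w : ι → M} {y : τ → M}
    {v : τ → R} (hw : ∀ i, IsSimpleModule R (Submodule.span R {w i}))
    (hvy : ∀ t, v t • y t = y t) (hspan : Submodule.span R (Set.range w ∪ Set.range y) = ⊤)
    (hfin : ∀ t, Module.Finite k (Submodule.span R {v t}))
    (hrank : ∑ i, Module.finrank k (Submodule.span R {w i}) +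
      ∑ t, Module.finrank k (Submodule.span R {v t}) ≤ Module.finrank k M) :
    IsSemisimpleAddProjective (LinearMap.id : M →ₗ[R] M) := by
  classical
  have bijective := generatorMap_bijective hvy hspan hfin hrank
  have (t : τ) : Module.Projective R (Submodule.span R {v t}) :=
    projective_span_singleton_of_isIdempotentElem
      (isIdempotentElem_of_generatorMap_injective hvy bijective.1 t)
  have : Module.Projective R (∀ t, Submodule.span R {v t}) :=
    .of_equiv (DFinsupp.linearEquivFunOnFintype (R := R))
  let e := LinearEquiv.ofBijective _ bijective
  have id_eq : (LinearMap.id : M →ₗ[R] M) = e.toLinearMap ∘ₗ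
      (LinearMap.inl R _ _ ∘ₗ .id ∘ₗ LinearMap.fst R _ _ +
        LinearMap.inr R _ _ ∘ₗ .id ∘ₗ LinearMap.snd R _ _) ∘ₗ e.symm.toLinearMap := by
    ext x
    simp
  rw [id_eq]
  exact .comp_left (.comp_right (.add
    (.comp_left (.comp_right .id_of_isSemisimpleModule _) _)
    (.comp_left (.comp_right .id_of_projective _) _)) _) _

theorem eq_top_of_isLoweringChain_mem {k R M ι : Type*} [Field k] [Ring R] [Algebra k R]
    [AddCommGroup M] [Module k M] [Module R M] [IsScalarTower k R M] [Module.Finite k M]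
    [Fintype ι] {F : R} {len : ι → ℕ} {x : ι → ℕ → M} {W : Submodule R M}
    (hx : ∀ i, IsLoweringChain k F (x i) (len i)) (h0 : LinearIndependent k fun i => x i 0)
    (hlen : ∑ i, len i = Module.finrank k M) (hW : ∀ i j, x i j ∈ W) : W = ⊤ := by
  have span_eq_top := (IsLoweringChain.linearIndependent hx h0).span_eq_top_of_card_eq_finrank'
    (by simpa only [Fintype.card_sigma, Fintype.card_fin] using hlen)
  refine (Submodule.restrictScalars_eq_top_iff k R M).1 (top_le_iff.1 ?_)
  rw [← span_eq_top, Submodule.span_le]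
  rintro _ ⟨p, rfl⟩
  exact hW _ _

theorem sum_range_add_sub_one_sub_two_mul {a b m : ℕ} (hma : m ≤ a) (hmb : m ≤ b) :
    ∑ t ∈ Finset.range m, (a + b - 1 - 2 * t) = m * (a + b - m) := by
  induction m with
  | zero => rw [Finset.sum_range_zero, zero_mul]
  | succ m ih =>
    rw [Finset.sum_range_succ, ih (by omega) (by omega)]
    obtain ⟨a, rfl⟩ := Nat.exists_eq_add_of_le hma
    obtain ⟨b, rfl⟩ := Nat.exists_eq_add_of_le hmb
    rw [show m + 1 + a + (m + 1 + b) - m = m + 2 + a + b by omega,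
      show m + 1 + a + (m + 1 + b) - (m + 1) = m + 1 + a + b by omega,
      show m + 1 + a + (m + 1 + b) - 1 - 2 * m = 1 + a + b by omega]
    ring

namespace SmallQuantumSl2

/-- The length of the chain through the lowest vector of level `t` in an `a × b` grid. The levels
`t < a + b - N` are those whose lowest vectors are involved in projective summands. -/
def chainLength (N a b t : ℕ) : ℕ :=
  if t < a + b - N then N else a + b - 1 - 2 * t

theorem chainLength_of_lt {N a b t : ℕ} (ht : t < a + b - N) : chainLength N a b t = N :=
  if_pos ht

theorem sum_range_chainLength_of_lt (N a b : ℕ) :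
    ∑ t ∈ Finset.range (a + b - N), chainLength N a b t = (a + b - N) * N := by
  rw [Finset.sum_eq_card_nsmul fun t ht => chainLength_of_lt (Finset.mem_range.1 ht),
    Finset.card_range, smul_eq_mul]

theorem sum_chainLength {N a b : ℕ} (ha : a ≤ N) (hb : b ≤ N) :
    ∑ t ∈ Finset.range (min a b), chainLength N a b t = a * b := by
  have sum_all : ∑ t ∈ Finset.range (min a b), (a + b - 1 - 2 * t) = a * b := by
    rw [sum_range_add_sub_one_sub_two_mul (min_le_left a b) (min_le_right a b)]
    rcases le_total a b with h | h
    · rw [min_eq_left h, Nat.add_sub_cancel_left]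
    · rw [min_eq_right h, Nat.add_sub_cancel, mul_comm]
  have sum_low : ∑ t ∈ Finset.range (a + b - N), chainLength N a b t =
      ∑ t ∈ Finset.range (a + b - N), (a + b - 1 - 2 * t) := by
    rw [sum_range_add_sub_one_sub_two_mul (by omega) (by omega),
      sum_range_chainLength_of_lt]
    rcases Nat.le_total (a + b) N with h | h
    · rw [Nat.sub_eq_zero_of_le h, zero_mul, zero_mul]
    · rw [Nat.sub_sub_self h]
  have hle : a + b - N ≤ min a b := by omega
  rw [← sum_all, ← Finset.sum_range_add_sum_Ico _ hle, ← Finset.sum_range_add_sum_Ico _ hle,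
    sum_low]
  exact congrArg _ (Finset.sum_congr rfl fun t ht => if_neg (Finset.mem_Ico.1 ht).1.not_gt)

/-- The levels below `m` whose lowest vectors generate simple summands: those from `h` on, and the
middle one of the first `h` levels when `h` is odd. The remaining levels are paired off as
`t, h - 1 - t` with `t < h / 2`. -/
def simpleLevel (h m : ℕ) : Fin (m - h) ⊕ Fin (h % 2) → ℕ :=
  Sum.elim (fun i => h + i) fun _ => h / 2

theorem simpleLevel_lt {h m : ℕ} (hm : h ≤ m) (i : Fin (m - h) ⊕ Fin (h % 2)) :
    simpleLevel h m i < m := by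
  rcases i with ⟨i, hi⟩ | ⟨i, hi⟩ <;> simp only [simpleLevel, Sum.elim_inl, Sum.elim_inr] <;> omega

theorem le_simpleLevel_or_eq (h m : ℕ) (i : Fin (m - h) ⊕ Fin (h % 2)) :
    h ≤ simpleLevel h m i ∨ 2 * simpleLevel h m i + 1 = h := by
  rcases i with ⟨i, hi⟩ | ⟨i, hi⟩ <;> simp only [simpleLevel, Sum.elim_inl, Sum.elim_inr] <;> omega

theorem exists_simpleLevel_eq_or_mem_pair {h m t : ℕ} (ht : t < m) :
    (∃ i, simpleLevel h m i = t) ∨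
      ∃ s : Fin (h / 2), t ∈ ({(s : ℕ), s + (h - 1 - 2 * s)} : Set ℕ) := by
  rcases lt_trichotomy (2 * t + 1) h with hlt | heq | hgt
  · exact .inr ⟨⟨t, by omega⟩, .inl rfl⟩
  · exact .inl ⟨.inr ⟨0, by omega⟩, show h / 2 = t by omega⟩
  rcases le_or_gt h t with hle | hgt'
  · exact .inl ⟨.inl ⟨t - h, by omega⟩, Nat.add_sub_cancel' hle⟩
  · exact .inr ⟨⟨h - 1 - t, by omega⟩,
      .inr (show t = h - 1 - t + (h - 1 - 2 * (h - 1 - t)) by omega)⟩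

theorem chainLength_simpleLevel {N a b m : ℕ} (i : Fin (m - (a + b - N)) ⊕ Fin ((a + b - N) % 2)) :
    chainLength N a b (simpleLevel (a + b - N) m i) =
      a + b - 1 - 2 * simpleLevel (a + b - N) m i := by
  have := le_simpleLevel_or_eq (a + b - N) m i
  unfold chainLength
  split_ifs <;> omega

theorem sum_chainLength_simpleLevel {N a b m : ℕ} (hm : a + b - N ≤ m) :
    ∑ i, chainLength N a b (simpleLevel (a + b - N) m i) + (a + b - N) / 2 * (2 * N) =
      ∑ t ∈ Finset.range m, chainLength N a b t := by
  have middle : (a + b - N) % 2 * chainLength N a b ((a + b - N) / 2) = (a + b - N) % 2 * N := by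
    rcases Nat.mod_two_eq_zero_or_one (a + b - N) with h | h
    · rw [h, zero_mul, zero_mul]
    · rw [chainLength_of_lt (by omega)]
  have halves : (a + b - N) * N = (a + b - N) % 2 * N + (a + b - N) / 2 * (2 * N) := by
    conv_lhs => rw [← Nat.mod_add_div (a + b - N) 2]
    ring
  rw [← Finset.sum_range_add_sum_Ico _ hm, Finset.sum_Ico_eq_sum_range,
    sum_range_chainLength_of_lt, Fintype.sum_sum_type, Finset.sum_range, halves, ← middle]
  simp only [simpleLevel, Sum.elim_inl, Sum.elim_inr, Finset.sum_const, Finset.card_univ,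
    Fintype.card_fin, smul_eq_mul]
  ring

namespace GridModule

section Summands

variable {k R M : Type*} [Field k] [Ring R] [Algebra k R] [AddCommGroup M] [Module k M]
  [Module R M] [IsScalarTower k R M] {A : SmallQuantumSl2 k R} {a b : ℕ}

theorem lowestWeight_mul_q (A : SmallQuantumSl2 k R) {a b t : ℕ} (ht : 2 * t + 1 < a + b) :
    (A.q ^ 2)⁻¹ ^ t * A.q ^ (a + b - 2) * A.q = A.q ^ (a + b - 1 - 2 * t) := by
  rw [mul_assoc, ← pow_succ, inv_pow, ← pow_mul,
    inv_mul_eq_iff_eq_mul₀ (pow_ne_zero _ A.q_ne_zero), ← pow_add]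
  congr 1
  omega

theorem exists_simple_summand (g : A.GridModule M a b) {t : ℕ} (hta : t < a) (htb : t < b)
    (ht : a + b ≤ A.N + 2 * t + 1) :
    ∃ w ∈ gridLevel g.basis t, w ≠ 0 ∧ IsSimpleModule R (Submodule.span R {w}) ∧
      Module.finrank k (Submodule.span R {w}) ≤ a + b - 1 - 2 * t ∧
      IsLoweringChain k A.F (fun j => A.E ^ j • w) (a + b - 1 - 2 * t) := by
  obtain ⟨w, hw, hw0, hF⟩ := g.exists_lowestVector hta htb
  have weight := g.gridLevel_le_weightSpace t hw
  have hl := lowestWeight_mul_q A (by omega : 2 * t + 1 < a + b)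
  have hE : A.E ^ (a + b - 1 - 2 * t) • w = 0 :=
    g.eq_zero_of_F_smul_eq_zero (by omega) (g.E_pow_smul_mem_gridLevel hw _)
      (F_smul_E_pow_smul_eq_zero weight hF hl)
  refine ⟨w, hw, hw0, isSimpleModule_span_singleton hw0 weight hF hl (by omega) hE, ?_,
    isLoweringChain_E_pow_smul weight hF hl (by omega)⟩
  simpa using finrank_span_singleton_le (z := fun _ : Unit => w) (fun _ => weight)
    (fun _ => hF ▸ Submodule.zero_mem _) (fun _ => hE) (mem_raisingSpan_self ())

theorem exists_isProjectiveConfiguration (g : A.GridModule M a b) (ha : a ≤ A.N) (hb : b ≤ A.N)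
    {t p : ℕ} (hp : 0 < p) (ht : 2 * t + p + 1 + A.N = a + b) :
    ∃ l, ∃ w ∈ gridLevel g.basis t, ∃ y, w ≠ 0 ∧
      A.IsProjectiveConfiguration (A.qb ^ t * g.κ) l p w y := by
  obtain ⟨w, hw, hw0, hF⟩ := g.exists_lowestVector (l := t) (by omega) (by omega)
  have hu := g.E_pow_smul_mem_gridLevel hw (p - 1)
  obtain ⟨y, hy, -, hFy⟩ := g.exists_F_smul_eq (by omega) hu 0
  refine ⟨_, w, hw, y, hw0, hp, by omega, ?_, g.gridLevel_le_weightSpace t hw, ?_, hF, hFy⟩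
  · rw [lowestWeight_mul_q A (by omega), show a + b - 1 - 2 * t = A.N + p by omega, pow_add,
      A.isPrimitiveRoot.pow_eq_one, one_mul]
  · rw [← mul_assoc, ← mul_assoc, ← pow_add, ← pow_add]
    exact (by omega : t + (p - 1) + 1 = p + t) ▸ g.gridLevel_le_weightSpace _ hy

theorem exists_projective_summand (g : A.GridModule M a b) (ha : a ≤ A.N) (hb : b ≤ A.N)
    {t p : ℕ} (hp : 0 < p) (ht : 2 * t + p + 1 + A.N = a + b) :
    ∃ (y : M) (v : R), v • y = y ∧ Module.Finite k (Submodule.span R {v}) ∧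
      Module.finrank k (Submodule.span R {v}) ≤ 2 * A.N ∧
      ∀ t' ∈ ({t, t + p} : Set ℕ), ∃ x : ℕ → M, IsLoweringChain k A.F x A.N ∧
        x 0 ∈ gridLevel g.basis t' ∧ x 0 ≠ 0 ∧ ∀ j, x j ∈ Submodule.span R {y} := by
  obtain ⟨l, w, hw, y, hw0, h⟩ := g.exists_isProjectiveConfiguration ha hb hp ht
  obtain ⟨v, hvy, hfin, hrank⟩ := h.exists_lift_generator
  refine ⟨y, v, hvy, hfin, hrank, ?_⟩
  have := h.lt
  have socleChain_zero : A.socleChain p w y 0 = w := by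
    rw [socleChain, if_pos hp, pow_zero, one_smul]
  have gapChain_zero : A.gapChain p w y 0 = A.E ^ p • w := by
    rw [gapChain, if_pos (by omega), pow_zero, one_smul]
  rintro _ (rfl | rfl)
  · exact ⟨_, h.isLoweringChain_socleChain, by rwa [socleChain_zero], by rwa [socleChain_zero],
      h.socleChain_mem_span_generator⟩
  · exact ⟨_, h.isLoweringChain_gapChain, gapChain_zero ▸ g.E_pow_smul_mem_gridLevel hw p,
      gapChain_zero ▸ g.E_pow_smul_ne_zero (by omega) hw hw0, h.gapChain_mem_span_generator⟩

end Summands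

theorem isSemisimpleAddProjective_id.{u} {k : Type*} {R M : Type u} [Field k] [Ring R]
    [Algebra k R] [AddCommGroup M] [Module k M] [Module R M] [IsScalarTower k R M]
    {A : SmallQuantumSl2 k R} {a b : ℕ} (g : A.GridModule M a b) (ha : a ≤ A.N) (hb : b ≤ A.N) :
    IsSemisimpleAddProjective (LinearMap.id : M →ₗ[R] M) := by
  have : Module.Finite k M := .of_basis g.basis
  have finrank_eq : Module.finrank k M = a * b := by
    rw [Module.finrank_eq_card_basis g.basis, Fintype.card_prod, Fintype.card_fin,
      Fintype.card_fin]
  set h := a + b - A.N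
  have hm : h ≤ min a b := by omega
  choose w hw hw0 hsimple hwrank hchain using fun i => g.exists_simple_summand
    (lt_min_iff.1 (simpleLevel_lt hm i)).1 (lt_min_iff.1 (simpleLevel_lt hm i)).2
    (by have := le_simpleLevel_or_eq h (min a b) i; omega)
  choose y v hvy hfin hrank hpair using fun t : Fin (h / 2) =>
    g.exists_projective_summand ha hb (t := t) (p := h - 1 - 2 * t) (by omega) (by omega)
  have exists_chain (t : Fin (min a b)) : ∃ x : ℕ → M,
      IsLoweringChain k A.F x (chainLength A.N a b t) ∧ x 0 ∈ gridLevel g.basis t ∧ x 0 ≠ 0 ∧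
        ∀ j, x j ∈ Submodule.span R (Set.range w ∪ Set.range y) := by
    rcases exists_simpleLevel_eq_or_mem_pair (h := h) t.2 with ⟨i, hi⟩ | ⟨s, hs⟩
    · refine ⟨_, hi ▸ chainLength_simpleLevel i ▸ hchain i, ?_, ?_, fun j => ?_⟩
      · simpa only [pow_zero, one_smul, hi] using hw i
      · simpa only [pow_zero, one_smul] using hw0 i
      · exact Submodule.smul_mem _ _ (Submodule.subset_span (.inl ⟨i, rfl⟩))
    · obtain ⟨x, hx, hxt, hx0, hxy⟩ := hpair s t hs
      refine ⟨x, ?_, hxt, hx0, fun j => Submodule.span_mono ?_ (hxy j)⟩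
      · rwa [chainLength_of_lt]
        rcases hs with hs | hs <;> rw [hs] <;> omega
      · exact Set.singleton_subset_iff.2 (.inr ⟨s, rfl⟩)
  choose x hx hxt hx0 hxW using exists_chain
  refine .id_of_generators hsimple hvy (eq_top_of_isLoweringChain_mem hx
    (linearIndependent_of_mem_gridLevel Fin.val_injective hxt hx0) ?_ hxW) hfin ?_
  · rw [Fin.sum_univ_eq_sum_range (chainLength A.N a b), sum_chainLength ha hb, finrank_eq]
  · rw [finrank_eq, ← sum_chainLength ha hb, ← sum_chainLength_simpleLevel hm]
    refine add_le_add
      (Finset.sum_le_sum fun i _ => (hwrank i).trans_eq (chainLength_simpleLevel i).symm)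
      ((Finset.sum_le_card_nsmul _ _ _ fun t _ => hrank t).trans ?_)
    rw [Finset.card_univ, Fintype.card_fin, smul_eq_mul]

end GridModule

end SmallQuantumSl2

section KernelRelations

variable (k : Type) [Field k] (n : ℕ) (q : k)

theorem K_pow : K k n q ^ n = 1 := by
  simpa only [K, map_pow, map_one] using RingQuot.mkAlgHom_rel k (Rel.Kord (k := k) (q := q))

theorem Kh_pow : Kh k n q ^ n = Kinv k n q ^ 2 := by
  simpa only [K, Kh, Kinv, map_pow] using RingQuot.mkAlgHom_rel k (Rel.Khord (k := k) (q := q))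

theorem commute_K_Kh : Commute (K k n q) (Kh k n q) := by
  simpa only [K, Kh, map_mul, commute_iff_eq] using
    RingQuot.mkAlgHom_rel k (Rel.KKh (k := k) (n := n) (q := q))

theorem K_mul_E_mul_Kinv : K k n q * E k n q * Kinv k n q = q ^ n • E k n q := by
  simpa only [K, E, Kinv, map_mul, map_pow, map_smul] using
    RingQuot.mkAlgHom_rel k (Rel.KE (k := k) (n := n) (q := q))

theorem K_mul_F_mul_Kinv : K k n q * F k n q * Kinv k n q = (q ^ n)⁻¹ • F k n q := by
  simpa only [K, F, Kinv, map_mul, map_pow, map_smul] using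
    RingQuot.mkAlgHom_rel k (Rel.KF (k := k) (n := n) (q := q))

theorem Kh_mul_E_mul_Khinv :
    Kh k n q * E k n q * Khinv k n q = (q ^ n * (q ^ 2)⁻¹) • E k n q := by
  simpa only [Kh, E, Khinv, map_mul, map_pow, map_smul] using
    RingQuot.mkAlgHom_rel k (Rel.KhE (k := k) (n := n) (q := q))

theorem Kh_mul_F_mul_Khinv :
    Kh k n q * F k n q * Khinv k n q = ((q ^ n)⁻¹ * q ^ 2) • F k n q := by
  simpa only [Kh, F, Khinv, map_mul, map_pow, map_smul] using
    RingQuot.mkAlgHom_rel k (Rel.KhF (k := k) (n := n) (q := q))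

theorem E_pow : E k n q ^ n ^ 2 = 0 := by
  simpa only [E, map_pow, map_zero] using RingQuot.mkAlgHom_rel k (Rel.Enil (k := k) (q := q))

theorem F_pow : F k n q ^ n ^ 2 = 0 := by
  simpa only [F, map_pow, map_zero] using RingQuot.mkAlgHom_rel k (Rel.Fnil (k := k) (q := q))

theorem F_mul_E_sub :
    F k n q * E k n q - q⁻¹ • (E k n q * F k n q) = 1 - Kinv k n q * Kh k n q := by
  simpa only [K, Kh, E, F, Kinv, map_mul, map_sub, map_pow, map_smul, map_one] using
    RingQuot.mkAlgHom_rel k (Rel.EF (k := k) (n := n) (q := q))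

theorem adjoin_generators_eq_top :
    Algebra.adjoin k {K k n q, Kh k n q, E k n q, F k n q} = ⊤ := by
  have := congrArg (Subalgebra.map (RingQuot.mkAlgHom k (Rel k n q)))
    (FreeAlgebra.adjoin_range_ι (R := k) (X := Fin 4))
  rw [AlgHom.map_adjoin, Algebra.map_top,
    (AlgHom.range_eq_top _).2 (RingQuot.mkAlgHom_surjective k (Rel k n q))] at this
  rw [← top_le_iff, ← this]
  refine Algebra.adjoin_mono ?_
  rintro _ ⟨_, ⟨i, rfl⟩, rfl⟩
  fin_cases i <;> simp [K, Kh, E, F]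

end KernelRelations

section KernelGenerators

variable {k : Type} [Field k] {n : ℕ} {q : k}

theorem Kinv_mul_K (hn : 0 < n) : Kinv k n q * K k n q = 1 := by
  rw [Kinv, ← pow_succ, Nat.sub_add_cancel hn, K_pow]

theorem K_mul_Kinv (hn : 0 < n) : K k n q * Kinv k n q = 1 := by
  rw [Kinv, ← pow_succ', Nat.sub_add_cancel hn, K_pow]

theorem Kinv_pow : Kinv k n q ^ n = 1 := by
  rw [Kinv, ← pow_mul, mul_comm, pow_mul, K_pow, one_pow]

theorem Kh_pow_sq : Kh k n q ^ n ^ 2 = 1 := by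
  rw [sq, pow_mul, Kh_pow, ← pow_mul, mul_comm, pow_mul, Kinv_pow, one_pow]

theorem Khinv_mul_Kh (hn : 0 < n) : Khinv k n q * Kh k n q = 1 := by
  rw [Khinv, ← pow_succ, Nat.sub_add_cancel (pow_pos hn 2), Kh_pow_sq]

theorem commute_Kinv_Kh : Commute (Kinv k n q) (Kh k n q) :=
  (commute_K_Kh k n q).pow_left _

theorem K_mul_Kinv_mul_Kh (hn : 0 < n) : K k n q * (Kinv k n q * Kh k n q) = Kh k n q := by
  rw [← mul_assoc, K_mul_Kinv hn, one_mul]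

theorem mul_eq_smul_mul_of_conj_eq_smul {R : Type*} [Ring R] [Algebra k R] {x x' e : R} {c : k}
    (hx : x' * x = 1) (h : x * e * x' = c • e) : x * e = c • (e * x) := by
  rw [← smul_mul_assoc, ← h, mul_assoc, hx, mul_one]

theorem mul_mul_eq_smul_mul {R : Type*} [Ring R] [Algebra k R] {x x' y e : R} {c d : k}
    (hc : c ≠ 0) (hx : x * x' = 1) (hx' : x' * x = 1) (h : x * e = c • (e * x))
    (h' : y * e = (c * d) • (e * y)) : x' * y * e = d • (e * (x' * y)) := by
  have twist : x' * e = c⁻¹ • (e * x') := by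
    rw [eq_inv_smul_iff₀ hc]
    calc c • (x' * e)
      _ = x' * (c • (e * x)) * x' := by
        rw [mul_smul_comm, smul_mul_assoc, mul_assoc, mul_assoc, hx, mul_one]
      _ = e * x' := by rw [← h, ← mul_assoc, hx', one_mul]
  rw [mul_assoc, h', mul_smul_comm, ← mul_assoc, twist, smul_mul_assoc, smul_smul, mul_right_comm,
    mul_inv_cancel₀ hc, one_mul, mul_assoc]

/-- The generators `K, K⁻¹K̂, E, F` of `ũ_q(sl₂)`. -/
def smallQuantumSl2 (hn : 1 < n) (hq : IsPrimitiveRoot q (n ^ 2)) :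
    SmallQuantumSl2 k (U k n q) where
  N := n ^ 2
  q := q
  qb := q ^ n
  K := K k n q
  G := Kinv k n q * Kh k n q
  E := E k n q
  F := F k n q
  one_lt := Nat.one_lt_pow two_ne_zero hn
  isPrimitiveRoot := hq
  qb_ne_zero := pow_ne_zero _ (hq.ne_zero (pow_pos (zero_lt_one.trans hn) 2).ne')
  K_mul_G := ((Commute.refl _).pow_right _ |>.mul_right (commute_K_Kh k n q)).eq
  K_mul_E := mul_eq_smul_mul_of_conj_eq_smul (Kinv_mul_K (by omega)) (K_mul_E_mul_Kinv k n q)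
  K_mul_F := mul_eq_smul_mul_of_conj_eq_smul (Kinv_mul_K (by omega)) (K_mul_F_mul_Kinv k n q)
  G_mul_E := by
    have hqn : q ^ n ≠ 0 := pow_ne_zero _ (hq.ne_zero (pow_pos (zero_lt_one.trans hn) 2).ne')
    exact mul_mul_eq_smul_mul hqn (K_mul_Kinv (by omega)) (Kinv_mul_K (by omega))
      (mul_eq_smul_mul_of_conj_eq_smul (Kinv_mul_K (by omega)) (K_mul_E_mul_Kinv k n q))
      (mul_eq_smul_mul_of_conj_eq_smul (Khinv_mul_Kh (by omega)) (Kh_mul_E_mul_Khinv k n q))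
  G_mul_F := by
    have hqn : q ^ n ≠ 0 := pow_ne_zero _ (hq.ne_zero (pow_pos (zero_lt_one.trans hn) 2).ne')
    exact mul_mul_eq_smul_mul (inv_ne_zero hqn) (K_mul_Kinv (by omega)) (Kinv_mul_K (by omega))
      (mul_eq_smul_mul_of_conj_eq_smul (Kinv_mul_K (by omega)) (K_mul_F_mul_Kinv k n q))
      (mul_eq_smul_mul_of_conj_eq_smul (Khinv_mul_Kh (by omega)) (Kh_mul_F_mul_Khinv k n q))
  F_mul_E := by rw [add_sub_assoc, ← sub_eq_iff_eq_add', F_mul_E_sub]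
  E_pow := E_pow k n q
  F_pow := F_pow k n q
  K_pow := by rw [sq, pow_mul, K_pow, one_pow]
  G_pow := by rw [commute_Kinv_Kh.mul_pow, Kh_pow_sq, sq, pow_mul, Kinv_pow, one_pow, one_mul]
  adjoin_eq_top := by
    rw [← top_le_iff, ← adjoin_generators_eq_top, Algebra.adjoin_le_iff]
    have mem {x : U k n q}
        (hx : x ∈ ({K k n q, Kinv k n q * Kh k n q, E k n q, F k n q} : Set _)) :=
      Algebra.subset_adjoin (R := k) hx
    rintro _ (rfl | rfl | rfl | rfl)
    · exact mem (.inl rfl)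
    · have := mul_mem (mem (.inl rfl)) (mem (.inr (.inl rfl)))
      rwa [K_mul_Kinv_mul_Kh (by omega)] at this
    · exact mem (.inr (.inr (.inl rfl)))
    · exact mem (.inr (.inr (.inr rfl)))

end KernelGenerators

section Flat

variable {k : Type} [Field k] {n : ℕ} {q : k} {M : Type*} [AddCommGroup M] [Module k M]
  [Module (U k n q) M] [IsScalarTower k (U k n q) M] {ρ : ℕ} {m : M}

theorem isPrimitiveRoot_q_pow (hn : 0 < n) (hq : IsPrimitiveRoot q (n ^ 2)) :
    IsPrimitiveRoot (q ^ n) n :=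
  hq.pow (pow_pos hn 2) (sq n)

theorem oneIdem_smul (hq : IsPrimitiveRoot q (n ^ 2)) (hρ : ρ < n)
    (hm : K k n q • m = (q ^ n) ^ ρ • m) {r : ℕ} (hr : r < n) :
    oneIdem k n q r • m = if r = ρ then m else 0 :=
  rootIdem_smul_of_smul_eq (isPrimitiveRoot_q_pow (by omega) hq) hr hρ hm

theorem flat_smul (hq : IsPrimitiveRoot q (n ^ 2)) (hρ : ρ < n)
    (hm : K k n q • m = (q ^ n) ^ ρ • m) : flat k n q • m = q⁻¹ ^ ρ • m := by
  rw [flat, Finset.sum_smul, Finset.sum_eq_single_of_mem ρ (Finset.mem_range.2 hρ)]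
  · rw [smul_assoc, oneIdem_smul hq hρ hm hρ, if_pos rfl]
  · intro r hr hne
    rw [smul_assoc, oneIdem_smul hq hρ hm (Finset.mem_range.1 hr), if_neg hne, smul_zero]

theorem sum_Icc_oneIdem_smul (hq : IsPrimitiveRoot q (n ^ 2)) (hρ : ρ < n)
    (hm : K k n q • m = (q ^ n) ^ ρ • m) :
    (∑ r ∈ Finset.Icc 1 (n - 1), oneIdem k n q r) • m = if ρ = 0 then 0 else m := by
  have eval (r : ℕ) (hr : r ∈ Finset.Icc 1 (n - 1)) :
      oneIdem k n q r • m = if r = ρ then m else 0 :=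
    oneIdem_smul hq hρ hm (by have := Finset.mem_Icc.1 hr; omega)
  rw [Finset.sum_smul, Finset.sum_congr rfl eval, Finset.sum_ite_eq']
  by_cases h : ρ = 0
  · rw [if_pos h, if_neg fun hmem => by have := Finset.mem_Icc.1 hmem; omega]
  · rw [if_neg h, if_pos (Finset.mem_Icc.2 ⟨by omega, by omega⟩)]

theorem isUnit_flat (hn : 0 < n) (hq : IsPrimitiveRoot q (n ^ 2)) : IsUnit (flat k n q) := by
  have : NeZero n := ⟨hn.ne'⟩
  have hqn := isPrimitiveRoot_q_pow hn hq
  have flat_mul : flat k n q * ∑ r ∈ Finset.range n, q ^ r • oneIdem k n q r = 1 := by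
    rw [← sum_rootIdem (T := K k n q) hqn, Finset.mul_sum]
    refine Finset.sum_congr rfl fun r hr => ?_
    have hr := Finset.mem_range.1 hr
    have eigen : flat k n q * oneIdem k n q r = q⁻¹ ^ r • oneIdem k n q r :=
      flat_smul (m := oneIdem k n q r) hq hr (mul_rootIdem hqn.pow_eq_one (K_pow k n q) hr.le)
    rw [mul_smul_comm, eigen, smul_smul, ← mul_pow,
      mul_inv_cancel₀ (hq.ne_zero (pow_pos hn 2).ne'), one_pow, one_smul]
    rfl
  have comm : Commute (flat k n q) (∑ r ∈ Finset.range n, q ^ r • oneIdem k n q r) :=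
    .sum_left _ _ _ fun r _ => .smul_left (.sum_right _ _ _ fun s _ => .smul_right
      (commute_rootIdem (commute_rootIdem (Commute.refl (K k n q)) r).symm s) _) _
  exact ⟨⟨_, _, flat_mul, comm.eq ▸ flat_mul⟩, rfl⟩

theorem inverse_flat_smul (hq : IsPrimitiveRoot q (n ^ 2)) (hρ : ρ < n)
    (hm : K k n q • m = (q ^ n) ^ ρ • m) : Ring.inverse (flat k n q) • m = q ^ ρ • m := by
  have hq0 : q ≠ 0 := hq.ne_zero (pow_pos (by omega) 2).ne'
  rw [← inv_inv (q ^ ρ), ← inv_pow, eq_inv_smul_iff₀ (pow_ne_zero _ (inv_ne_zero hq0)),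
    smul_comm, ← flat_smul hq hρ hm, ← mul_smul,
    Ring.inverse_mul_cancel _ (isUnit_flat (by omega) hq), one_smul]

end Flat

theorem gridVec_tensorProduct {k R M N T : Type*} [Field k] [Ring R] [AddCommGroup M] [Module k M]
    [Module R M] [AddCommGroup N] [Module k N] [Module R N] [AddCommGroup T] [Module k T]
    (e : M ⊗[k] N ≃ₗ[k] T) {a b : ℕ} {B : Module.Basis (Fin a) k M} {B' : Module.Basis (Fin b) k N}
    {x : R} {w : M} {w' : N} (hB : ∀ i, B i = x ^ (i : ℕ) • w) (hB' : ∀ i, B' i = x ^ (i : ℕ) • w')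
    (ha : x ^ a • w = 0) (hb : x ^ b • w' = 0) (r s : ℕ) :
    gridVec ((B.tensorProduct B').map e) r s = e ((x ^ r • w) ⊗ₜ (x ^ s • w')) := by
  unfold gridVec
  split_ifs with h
  · rw [Module.Basis.map_apply, Module.Basis.tensorProduct_apply, hB, hB']
  · obtain hr | hs : a ≤ r ∨ b ≤ s := by omega
    · rw [pow_smul_eq_zero_of_le hr ha, TensorProduct.zero_tmul, map_zero]
    · rw [pow_smul_eq_zero_of_le hs hb, TensorProduct.tmul_zero, map_zero]

namespace SmallQuantumSl2

variable {k R M N T : Type*} [Field k] [Ring R] [Algebra k R] [AddCommGroup M] [Module k M]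
  [Module R M] [IsScalarTower k R M] [AddCommGroup N] [Module k N] [Module R N]
  [IsScalarTower k R N] [AddCommGroup T] [Module k T] [Module R T] {A : SmallQuantumSl2 k R}

/-- The `R`-module `T` is a tensor product of `M` and `N` on which `K` and `G` act diagonally, while
`E` and `F` act on products of weight vectors by the Leibniz rule up to nonzero scalars, which may
depend on the weights. -/
structure IsTwistedTensor (A : SmallQuantumSl2 k R) (e : M ⊗[k] N ≃ₗ[k] T) : Prop where
  K_smul (m : M) (m' : N) : A.K • e (m ⊗ₜ m') = e ((A.K • m) ⊗ₜ (A.K • m'))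
  G_smul (m : M) (m' : N) : A.G • e (m ⊗ₜ m') = e ((A.G • m) ⊗ₜ (A.G • m'))
  E_smul {κ l κ' l' : k} {m : M} {m' : N} (hm : m ∈ A.weightSpace κ l)
    (hm' : m' ∈ A.weightSpace κ' l') : ∃ c d : k, c ≠ 0 ∧ d ≠ 0 ∧
      A.E • e (m ⊗ₜ m') = c • e ((A.E • m) ⊗ₜ m') + d • e (m ⊗ₜ (A.E • m'))
  F_smul {κ l κ' l' : k} {m : M} {m' : N} (hm : m ∈ A.weightSpace κ l)
    (hm' : m' ∈ A.weightSpace κ' l') : ∃ c d : k, c ≠ 0 ∧ d ≠ 0 ∧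
      A.F • e (m ⊗ₜ m') = c • e ((A.F • m) ⊗ₜ m') + d • e (m ⊗ₜ (A.F • m'))

theorem loweringCoeff_q_pow_eq_zero_iff {a r : ℕ} (ha : a < A.N) (hr : r ≤ a) :
    A.loweringCoeff (A.q ^ a) r = 0 ↔ r = 0 := by
  refine ⟨fun h => ?_, fun h => by simp [h, loweringCoeff]⟩
  contrapose! h
  exact loweringCoeff_ne_zero (A.q_pow_ne_one (by omega) (by omega))
    (pow_succ A.q a ▸ q_pow_ne_q_pow (by omega) (by omega) ha)

namespace IsTwistedTensor

variable {e : M ⊗[k] N ≃ₗ[k] T} {κ l κ' l' : k} {w : M} {w' : N}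

theorem tmul_mem_weightSpace [IsScalarTower k R T] (he : A.IsTwistedTensor e)
    (hw : w ∈ A.weightSpace κ l) (hw' : w' ∈ A.weightSpace κ' l') :
    e (w ⊗ₜ w') ∈ A.weightSpace (κ * κ') (l * l') := by
  constructor
  · rw [he.K_smul, hw.1, hw'.1, TensorProduct.smul_tmul_smul, map_smul]
  · rw [he.G_smul, hw.2, hw'.2, TensorProduct.smul_tmul_smul, map_smul]

theorem nonempty_gridModule [IsScalarTower k R T] [IsSimpleModule R M] [IsSimpleModule R N]
    (he : A.IsTwistedTensor e) :
    ∃ a ≤ A.N, ∃ b ≤ A.N, Nonempty (A.GridModule T a b) := by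
  obtain ⟨κ, a, w, ha, hw, hFw, hEw, B, hB⟩ := A.exists_basis_of_isSimpleModule M
  obtain ⟨κ', b, w', hb, hw', hFw', hEw', B', hB'⟩ := A.exists_basis_of_isSimpleModule N
  choose c d hc hd hF using fun r s =>
    he.F_smul (E_pow_smul_mem_weightSpace hw r) (E_pow_smul_mem_weightSpace hw' s)
  choose c' d' _ hd' hE using fun r s =>
    he.E_smul (E_pow_smul_mem_weightSpace hw r) (E_pow_smul_mem_weightSpace hw' s)
  have vec := gridVec_tensorProduct e hB hB' hEw hEw'
  refine ⟨a + 1, ha, b + 1, hb, ⟨{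
    basis := (B.tensorProduct B').map e
    κ := κ * κ'
    α := fun r s => c r s * A.loweringCoeff (A.q ^ a) r
    β := fun r s => d r s * A.loweringCoeff (A.q ^ b) s
    α' := c'
    β' := d'
    mem_weightSpace := fun r _ s _ => ?_
    F_smul := fun r _ s _ => ?_
    E_smul := fun r _ s _ => ?_
    α_eq_zero_iff := fun r hr s _ => by
      rw [mul_eq_zero_iff_left (hc r s), loweringCoeff_q_pow_eq_zero_iff ha (by omega)]
    β_eq_zero_iff := fun r _ s hs => by
      rw [mul_eq_zero_iff_left (hd r s), loweringCoeff_q_pow_eq_zero_iff hb (by omega)]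
    β'_ne_zero := fun r _ s _ => hd' r s }⟩⟩
  · rw [vec]
    convert he.tmul_mem_weightSpace (E_pow_smul_mem_weightSpace hw r)
      (E_pow_smul_mem_weightSpace hw' s) using 1
    rw [show a + 1 + (b + 1) - 2 = a + b by omega]
    congr 1 <;> ring
  · rw [vec, vec, vec, hF, F_smul_E_pow_smul_of_F_smul_eq_zero hw hFw,
      F_smul_E_pow_smul_of_F_smul_eq_zero hw' hFw',
      ← TensorProduct.smul_tmul' (A.loweringCoeff _ r),
      TensorProduct.tmul_smul (A.loweringCoeff _ s), map_smul, map_smul, smul_smul, smul_smul]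
  · rw [vec, vec, vec, hE, ← mul_smul, ← mul_smul, ← pow_succ', ← pow_succ']

end IsTwistedTensor

theorem IsTwistedTensor.isSemisimpleAddProjective_id.{u} {k M N : Type*} {R T : Type u} [Field k]
    [Ring R] [Algebra k R] [AddCommGroup M] [Module k M] [Module R M] [IsScalarTower k R M]
    [AddCommGroup N] [Module k N] [Module R N] [IsScalarTower k R N] [AddCommGroup T] [Module k T]
    [Module R T] [IsScalarTower k R T] [IsSimpleModule R M] [IsSimpleModule R N]
    {A : SmallQuantumSl2 k R} {e : M ⊗[k] N ≃ₗ[k] T} (he : A.IsTwistedTensor e) :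
    IsSemisimpleAddProjective (LinearMap.id : T →ₗ[R] T) := by
  obtain ⟨a, ha, b, hb, ⟨g⟩⟩ := he.nonempty_gridModule
  exact g.isSemisimpleAddProjective_id ha hb

end SmallQuantumSl2

section TensorModule

variable {k : Type} [Field k] {n : ℕ} {q : k}

/-- The vector space `M ⊗[k] N` as a type of its own, which carries the action of `ũ_q(sl₂)` through
`Δ` as an instance. -/
def TensorModule (_ : U k n q →ₐ[k] U k n q ⊗[k] U k n q) (M N : Type) [AddCommGroup M] [Module k M]
    [AddCommGroup N] [Module k N] : Type :=
  M ⊗[k] N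

namespace TensorModule

variable (Δ : U k n q →ₐ[k] U k n q ⊗[k] U k n q)
  (M N : Type) [AddCommGroup M] [Module k M] [Module (U k n q) M]
  [IsScalarTower k (U k n q) M]
  [AddCommGroup N] [Module k N] [Module (U k n q) N]
  [IsScalarTower k (U k n q) N]

instance : AddCommGroup (TensorModule Δ M N) := inferInstanceAs (AddCommGroup (M ⊗[k] N))
instance : Module k (TensorModule Δ M N) := inferInstanceAs (Module k (M ⊗[k] N))
instance : Module (U k n q) (TensorModule Δ M N) := tensorModule k n q Δ M N

instance [Module.Finite k M] [Module.Finite k N] : Module.Finite k (TensorModule Δ M N) :=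
  inferInstanceAs (Module.Finite k (M ⊗[k] N))

/-- The identification of `M ⊗[k] N` with `TensorModule Δ M N`. -/
def of : M ⊗[k] N ≃ₗ[k] TensorModule Δ M N := LinearEquiv.refl k (M ⊗[k] N)

/-- The action of `ũ_q(sl₂) ⊗ ũ_q(sl₂)` on `M ⊗[k] N`. -/
def action : U k n q ⊗[k] U k n q →ₐ[k] Module.End k (M ⊗[k] N) :=
  (Module.endTensorEndAlgHom (R := k) (S := k) (A := k) (M := M) (N := N)).comp
    (Algebra.TensorProduct.map (Algebra.lsmul k k M) (Algebra.lsmul k k N))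

theorem action_tmul (x y : U k n q) (m : M) (m' : N) :
    action M N (x ⊗ₜ y) (m ⊗ₜ m') = (x • m) ⊗ₜ (y • m') := rfl

theorem smul_of (x : U k n q) (t : M ⊗[k] N) :
    x • of Δ M N t = of Δ M N (action M N (Δ x) t) := rfl

instance : IsScalarTower k (U k n q) (TensorModule Δ M N) where
  smul_assoc c x t := by
    obtain ⟨t, rfl⟩ := (of Δ M N).surjective t
    rw [smul_of, smul_of, map_smul, map_smul, LinearMap.smul_apply, map_smul]

variable {M N}
variable {M' N' : Type} [AddCommGroup M'] [Module k M'] [Module (U k n q) M']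
  [IsScalarTower k (U k n q) M']
  [AddCommGroup N'] [Module k N'] [Module (U k n q) N']
  [IsScalarTower k (U k n q) N']

theorem map_action (f : M →ₗ[U k n q] M') (g : N →ₗ[U k n q] N') (y : U k n q ⊗[k] U k n q) :
    TensorProduct.map (f.restrictScalars k) (g.restrictScalars k) ∘ₗ action M N y =
      action M' N' y ∘ₗ TensorProduct.map (f.restrictScalars k) (g.restrictScalars k) := by
  induction y with
  | zero => rw [map_zero, map_zero, LinearMap.comp_zero, LinearMap.zero_comp]
  | add y z hy hz => rw [map_add, map_add, LinearMap.comp_add, LinearMap.add_comp, hy, hz]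
  | tmul x y =>
    ext m m'
    exact congrArg₂ (· ⊗ₜ[k] ·) (f.map_smul x m) (g.map_smul y m')

/-- The tensor product of two `ũ_q(sl₂)`-linear maps. -/
def map (f : M →ₗ[U k n q] M') (g : N →ₗ[U k n q] N') :
    TensorModule Δ M N →ₗ[U k n q] TensorModule Δ M' N' where
  __ := of Δ M' N' ∘ₗ TensorProduct.map (f.restrictScalars k) (g.restrictScalars k) ∘ₗ
    (of Δ M N).symm.toLinearMap
  map_smul' x t := congrArg (of Δ M' N') (LinearMap.congr_fun (map_action f g (Δ x)) t)

theorem map_of (f : M →ₗ[U k n q] M') (g : N →ₗ[U k n q] N') (t : M ⊗[k] N) :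
    map Δ f g (of Δ M N t) =
      of Δ M' N' (TensorProduct.map (f.restrictScalars k) (g.restrictScalars k) t) := rfl

end TensorModule

end TensorModule

namespace TensorModule

section Comultiplication

variable {k : Type} [Field k] {n : ℕ} {q : k} {Δ : U k n q →ₐ[k] U k n q ⊗[k] U k n q}
  {M N : Type} [AddCommGroup M] [Module k M] [Module (U k n q) M]
  [IsScalarTower k (U k n q) M]
  [AddCommGroup N] [Module k N] [Module (U k n q) N]
  [IsScalarTower k (U k n q) N]

theorem K_smul_of (hΔ : IsComul k n q Δ) (m : M) (m' : N) :
    K k n q • of Δ M N (m ⊗ₜ m') = of Δ M N ((K k n q • m) ⊗ₜ (K k n q • m')) := by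
  rw [smul_of, hΔ.1, action_tmul]

theorem G_smul_of (hΔ : IsComul k n q Δ) (m : M) (m' : N) :
    (Kinv k n q * Kh k n q) • of Δ M N (m ⊗ₜ m') =
      of Δ M N (((Kinv k n q * Kh k n q) • m) ⊗ₜ ((Kinv k n q * Kh k n q) • m')) := by
  rw [smul_of, map_mul, Kinv, map_pow, hΔ.1, hΔ.2.1, Algebra.TensorProduct.tmul_pow,
    Algebra.TensorProduct.tmul_mul_tmul, action_tmul]

theorem E_smul_of (hΔ : IsComul k n q Δ) (m : M) (m' : N) :
    E k n q • of Δ M N (m ⊗ₜ m') =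
      of Δ M N ((E k n q • m) ⊗ₜ (Ring.inverse (flat k n q) • m')) +
      of Δ M N ((Kinv k n q • m) ⊗ₜ (oneIdem k n q 0 • E k n q • m')) +
      of Δ M N (m ⊗ₜ ((∑ r ∈ Finset.Icc 1 (n - 1), oneIdem k n q r) • E k n q • m')) := by
  rw [smul_of, hΔ.2.2.1]
  simp only [map_add, LinearMap.add_apply, action_tmul, mul_smul, one_smul]

theorem F_smul_of (hΔ : IsComul k n q Δ) (m : M) (m' : N) :
    F k n q • of Δ M N (m ⊗ₜ m') =
      of Δ M N ((F k n q • m) ⊗ₜ (flat k n q • m')) +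
      of Δ M N (((Kinv k n q * Kh k n q) • m) ⊗ₜ
        (F k n q • (∑ r ∈ Finset.Icc 1 (n - 1), oneIdem k n q r) • m')) +
      of Δ M N ((Kh k n q • m) ⊗ₜ (F k n q • oneIdem k n q 0 • m')) := by
  rw [smul_of, hΔ.2.2.2]
  simp only [map_add, LinearMap.add_apply, action_tmul, mul_smul _ _ m']

theorem exists_eq_pow_of_K_smul_eq {V : Type*} [AddCommGroup V] [Module k V] [Module (U k n q) V]
    [IsScalarTower k (U k n q) V] (hn : 0 < n) (hq : IsPrimitiveRoot q (n ^ 2)) {κ : k} {v : V}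
    (hv0 : v ≠ 0) (hv : K k n q • v = κ • v) : ∃ ρ < n, (q ^ n) ^ ρ = κ := by
  have : NeZero n := ⟨hn.ne'⟩
  refine (isPrimitiveRoot_q_pow hn hq).eq_pow_of_pow_eq_one (smul_left_injective k hv0 ?_)
  simpa only [K_pow, one_smul] using (pow_smul_of_smul_eq hv n).symm

theorem exists_E_smul_of_eq (hq : IsPrimitiveRoot q (n ^ 2)) (hΔ : IsComul k n q Δ) {κ : k}
    (hκ : κ ≠ 0) {ρ σ : ℕ} (hρ : ρ < n) (hσ : σ < n) {m : M} {m' : N} (hm : K k n q • m = κ • m)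
    (hm' : K k n q • m' = (q ^ n) ^ ρ • m')
    (hEm' : K k n q • E k n q • m' = (q ^ n) ^ σ • E k n q • m') :
    ∃ d : k, d ≠ 0 ∧ E k n q • of Δ M N (m ⊗ₜ m') =
      q ^ ρ • of Δ M N ((E k n q • m) ⊗ₜ m') + d • of Δ M N (m ⊗ₜ (E k n q • m')) := by
  refine ⟨if σ = 0 then κ ^ (n - 1) else 1, by split_ifs <;> simp [hκ], ?_⟩
  rw [E_smul_of hΔ, inverse_flat_smul hq hρ hm', oneIdem_smul hq hσ hEm' (by omega),
    sum_Icc_oneIdem_smul hq hσ hEm', Kinv, pow_smul_of_smul_eq hm, TensorProduct.tmul_smul,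
    map_smul, add_assoc]
  rcases eq_or_ne σ 0 with rfl | h
  · simp [← TensorProduct.smul_tmul']
  · simp [h, h.symm]

theorem exists_F_smul_of_eq (hq : IsPrimitiveRoot q (n ^ 2)) (hΔ : IsComul k n q Δ) {κ l : k}
    (hκ : κ ≠ 0) (hl : l ≠ 0) {ρ : ℕ} (hρ : ρ < n) {m : M} {m' : N} (hm : K k n q • m = κ • m)
    (hGm : (Kinv k n q * Kh k n q) • m = l • m) (hm' : K k n q • m' = (q ^ n) ^ ρ • m') :
    ∃ d : k, d ≠ 0 ∧ F k n q • of Δ M N (m ⊗ₜ m') =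
      q⁻¹ ^ ρ • of Δ M N ((F k n q • m) ⊗ₜ m') + d • of Δ M N (m ⊗ₜ (F k n q • m')) := by
  have hKh : Kh k n q • m = (l * κ) • m := by
    rw [← K_mul_Kinv_mul_Kh (by omega), mul_smul, hGm, smul_comm, hm, smul_smul]
  refine ⟨if ρ = 0 then l * κ else l, by split_ifs <;> simp [hκ, hl], ?_⟩
  rw [F_smul_of hΔ, flat_smul hq hρ hm', oneIdem_smul hq hρ hm' (by omega),
    sum_Icc_oneIdem_smul hq hρ hm', hGm, hKh, TensorProduct.tmul_smul, map_smul, add_assoc]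
  rcases eq_or_ne ρ 0 with rfl | h
  · simp [← TensorProduct.smul_tmul']
  · simp [h, h.symm, ← TensorProduct.smul_tmul']

theorem isTwistedTensor_of (hn : 1 < n) (hq : IsPrimitiveRoot q (n ^ 2)) (hΔ : IsComul k n q Δ) :
    (smallQuantumSl2 hn hq).IsTwistedTensor (of Δ M N) where
  K_smul := K_smul_of hΔ
  G_smul := G_smul_of hΔ
  E_smul {κ l κ' l' m m'} hm hm' := by
    obtain rfl | hm0 := eq_or_ne m 0
    · exact ⟨1, 1, one_ne_zero, one_ne_zero, by simp⟩
    obtain rfl | hm'0 := eq_or_ne m' 0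
    · exact ⟨1, 1, one_ne_zero, one_ne_zero, by simp⟩
    obtain ⟨ρ, hρ, rfl⟩ := exists_eq_pow_of_K_smul_eq (by omega) hq hm'0 hm'.1
    have hEm' := (SmallQuantumSl2.E_smul_mem_weightSpace hm').1
    rw [show (smallQuantumSl2 hn hq).qb = q ^ n from rfl, ← pow_succ', pow_eq_pow_mod _
      (isPrimitiveRoot_q_pow (by omega) hq).pow_eq_one] at hEm'
    obtain ⟨d, hd, h⟩ := exists_E_smul_of_eq hq hΔ
      (SmallQuantumSl2.ne_zero_of_mem_weightSpace hm hm0).1 hρ (Nat.mod_lt _ (by omega)) hm.1 hm'.1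
      hEm'
    exact ⟨q ^ ρ, d, pow_ne_zero _ (smallQuantumSl2 hn hq).q_ne_zero, hd, h⟩
  F_smul {κ l κ' l' m m'} hm hm' := by
    obtain rfl | hm0 := eq_or_ne m 0
    · exact ⟨1, 1, one_ne_zero, one_ne_zero, by simp⟩
    obtain rfl | hm'0 := eq_or_ne m' 0
    · exact ⟨1, 1, one_ne_zero, one_ne_zero, by simp⟩
    obtain ⟨ρ, hρ, rfl⟩ := exists_eq_pow_of_K_smul_eq (by omega) hq hm'0 hm'.1
    obtain ⟨hκ, hl⟩ := SmallQuantumSl2.ne_zero_of_mem_weightSpace hm hm0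
    obtain ⟨d, hd, h⟩ := exists_F_smul_of_eq hq hΔ hκ hl hρ hm.1 hm.2 hm'.1
    exact ⟨q⁻¹ ^ ρ, d, pow_ne_zero _ (inv_ne_zero (smallQuantumSl2 hn hq).q_ne_zero), hd, h⟩

end Comultiplication

end TensorModule

theorem exists_sum_comp_eq_id_of_isSemisimpleModule (R M : Type*) [Ring R] [AddCommGroup M]
    [Module R M] [IsSemisimpleModule R M] [Module.Finite R M] :
    ∃ (m : ℕ) (L : Fin m → Submodule R M) (i : ∀ j, L j →ₗ[R] M) (p : ∀ j, M →ₗ[R] L j),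
      (∀ j, IsSimpleModule R (L j)) ∧ ∑ j, i j ∘ₗ p j = LinearMap.id := by
  classical
  obtain ⟨m, L, e, hL⟩ := IsSemisimpleModule.exists_linearEquiv_fin_dfinsupp R M
  refine ⟨m, L, fun j => e.symm.toLinearMap.comp (DFinsupp.lsingle (R := R) (M := fun j => L j) j),
    fun j => (DFinsupp.lapply (R := R) (M := fun j => L j) j).comp e.toLinearMap, hL, ?_⟩
  refine LinearMap.ext fun x => e.injective ?_
  ext j
  simp [DFinsupp.single_apply]

section TensorModule

variable {k : Type} [Field k] {n : ℕ} {q : k} {Δ : U k n q →ₐ[k] U k n q ⊗[k] U k n q}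
  {M N : Type} [AddCommGroup M] [Module k M] [Module (U k n q) M] [IsScalarTower k (U k n q) M]
  [AddCommGroup N] [Module k N] [Module (U k n q) N] [IsScalarTower k (U k n q) N]

theorem TensorModule.sum_map_comp_map_eq_id {ι κ : Type*} [Fintype ι] [Fintype κ]
    {L : ι → Submodule (U k n q) M} {L' : κ → Submodule (U k n q) N}
    {i : ∀ j, L j →ₗ[U k n q] M} {p : ∀ j, M →ₗ[U k n q] L j}
    {i' : ∀ j, L' j →ₗ[U k n q] N} {p' : ∀ j, N →ₗ[U k n q] L' j}
    (h : ∑ j, i j ∘ₗ p j = LinearMap.id) (h' : ∑ j, i' j ∘ₗ p' j = LinearMap.id) :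
    ∑ j, ∑ j', map (M := L j) (N := L' j') Δ (i j) (i' j') ∘ₗ
      map (M' := L j) (N' := L' j') Δ (p j) (p' j') = LinearMap.id := by
  ext t
  obtain ⟨t, rfl⟩ := (of Δ M N).surjective t
  simp only [LinearMap.sum_apply, LinearMap.comp_apply, map_of, LinearMap.id_apply, ← map_sum]
  congr 1
  induction t with
  | zero => simp
  | add s t hs ht => simp only [map_add, Finset.sum_add_distrib, hs, ht]
  | tmul m m' =>
    have hm : ∑ j, i j (p j m) = m := by simpa using LinearMap.congr_fun h m
    have hm' : ∑ j, i' j (p' j m') = m' := by simpa using LinearMap.congr_fun h' m'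
    simp only [TensorProduct.map_tmul, LinearMap.restrictScalars_apply, ← TensorProduct.tmul_sum,
      ← TensorProduct.sum_tmul, hm, hm']

theorem TensorModule.isSemisimpleAddProjective_id [Module.Finite (U k n q) M]
    [IsSemisimpleModule (U k n q) M] [Module.Finite (U k n q) N] [IsSemisimpleModule (U k n q) N]
    (hn : 1 < n) (hq : IsPrimitiveRoot q (n ^ 2)) (hΔ : IsComul k n q Δ) :
    IsSemisimpleAddProjective (LinearMap.id : TensorModule Δ M N →ₗ[U k n q] _) := by
  obtain ⟨_, L, i, p, _, hM⟩ := exists_sum_comp_eq_id_of_isSemisimpleModule (U k n q) M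
  obtain ⟨_, L', i', p', _, hN⟩ := exists_sum_comp_eq_id_of_isSemisimpleModule (U k n q) N
  rw [← sum_map_comp_map_eq_id hM hN]
  refine .sum _ fun j _ => .sum _ fun j' _ => ?_
  have simple_tensor := (isTwistedTensor_of (M := L j) (N := L' j') hn hq hΔ)
    |>.isSemisimpleAddProjective_id
  exact (simple_tensor.comp_left (map (M := L j) (N := L' j') Δ (i j) (i' j'))).comp_right
    (map (M' := L j) (N' := L' j') Δ (p j) (p' j'))

end TensorModule

theorem isSemisimpleModule_S (k : Type) [Field k] (n : ℕ) (q : k) (i j : ℕ) :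
    IsSemisimpleModule (U k n q) (S k n q i j) := by
  rw [S, sSup_eq_iSup]
  refine isSemisimpleModule_biSup_of_isSemisimpleModule_submodule fun N hN => ?_
  have := hN.2
  infer_instance

theorem statement16_general (k : Type) [Field k] (n : ℕ) (hn : 1 < n) (q : k)
    (hq : IsPrimitiveRoot q (n ^ 2)) (Δ : U k n q →ₐ[k] (U k n q ⊗[k] U k n q))
    (hΔ : IsComul k n q Δ) (M N : Type) [AddCommGroup M] [Module k M] [Module (U k n q) M]
    [IsScalarTower k (U k n q) M] [Module.Finite (U k n q) M] [IsSemisimpleModule (U k n q) M]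
    [AddCommGroup N] [Module k N] [Module (U k n q) N] [IsScalarTower k (U k n q) N]
    [Module.Finite (U k n q) N] [IsSemisimpleModule (U k n q) N] :
    letI := tensorModule k n q Δ M N
    ∀ (A B : Type) (_ : AddCommGroup A) (_ : Module (U k n q) A)
      (_ : AddCommGroup B) (_ : Module (U k n q) B),
      Nonempty ((M ⊗[k] N) ≃ₗ[U k n q] (A × B)) →
      Nontrivial A →
      (∀ A₁ A₂ : Submodule (U k n q) A, IsCompl A₁ A₂ → A₁ = ⊥ ∨ A₂ = ⊥) →
      IsSimpleModule (U k n q) A ∨ Module.Projective (U k n q) A := by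
  intro A B _ _ _ _ ⟨(e : TensorModule Δ M N ≃ₗ[U k n q] A × B)⟩ _ hA
  have : Module.Finite k (U k n q) := (smallQuantumSl2 hn hq).finite
  have : Module.Finite k M := .trans (U k n q) M
  have : Module.Finite k N := .trans (U k n q) N
  have : IsNoetherian (U k n q) (TensorModule Δ M N) := isNoetherian_of_tower k inferInstance
  have : IsArtinian (U k n q) (TensorModule Δ M N) := isArtinian_of_tower k inferInstance
  let i : A →ₗ[U k n q] TensorModule Δ M N := e.symm ∘ₗ LinearMap.inl _ A B
  let p : TensorModule Δ M N →ₗ[U k n q] A := LinearMap.fst _ A B ∘ₗ e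
  have hpi : p ∘ₗ i = .id := LinearMap.ext fun a => by simp [p, i]
  have hi : Function.Injective i := e.symm.injective.comp LinearMap.inl_injective
  have := isNoetherian_of_injective i hi
  have := isArtinian_of_injective i hi
  exact isSimpleModule_or_projective_of_indecomposable hA
    (.id_of_comp_eq_id hpi (TensorModule.isSemisimpleAddProjective_id hn hq hΔ))

end QFL

open QFL in
/-- Proposition 4.6: every indecomposable direct summand of `S_{2i₁,j₁} ⊗ S_{2i₂,j₂}`
is either simple or projective.  (A direct summand is presented by a decomposition
`S ⊗ S ≅ A × B` of `u`-modules.) -/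
theorem statement16 (k : Type) [Field k] [IsAlgClosed k] [CharZero k]
    (n : ℕ) (hn : 0 < n) (h4 : 4 ∣ n) (q : k) (hq : IsPrimitiveRoot q (n ^ 2))
    (Δ : U k n q →ₐ[k] (U k n q ⊗[k] U k n q)) (hΔ : IsComul k n q Δ) :
    ∀ i₁ i₂ j₁ j₂ : ℕ, 1 ≤ i₁ → i₁ ≤ n ^ 2 / 2 → 1 ≤ i₂ → i₂ ≤ n ^ 2 / 2 →
      j₁ ≤ 1 → j₂ ≤ 1 →
      letI := tensorModule k n q Δ (S k n q i₁ j₁) (S k n q i₂ j₂)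
      ∀ (A B : Type) (_ : AddCommGroup A) (_ : Module (U k n q) A)
        (_ : AddCommGroup B) (_ : Module (U k n q) B),
        Nonempty (((S k n q i₁ j₁) ⊗[k] (S k n q i₂ j₂)) ≃ₗ[U k n q] (A × B)) →
        Nontrivial A →
        (∀ A₁ A₂ : Submodule (U k n q) A, IsCompl A₁ A₂ → A₁ = ⊥ ∨ A₂ = ⊥) →
        IsSimpleModule (U k n q) A ∨ Module.Projective (U k n q) A := by
  intro i₁ i₂ j₁ j₂ _ _ _ _ _ _
  have hn1 : 1 < n := by have := Nat.le_of_dvd hn h4; omega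
  have : Module.Finite k (U k n q) := (smallQuantumSl2 hn1 hq).finite
  have : IsNoetherianRing (U k n q) := isNoetherian_of_tower k inferInstance
  have := isSemisimpleModule_S k n q
  exact statement16_general k n hn1 q hq Δ hΔ (S k n q i₁ j₁) (S k n q i₂ j₂)
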